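/- arXiv:1706.01356 — 2 statements merged into one kernel-verified Lean document; each statement's English description precedes it below -/
import Mathlib

section
/- Let K be a field of characteristic different from 2, let q_2 be a Pfister form over K, and let q_1 be a Pfister neighbour of q_2. Then q_1 is stably birational to q_2, i.e. the projective quadrics associated to q_1 and q_2 are stably birational over K. -/
/-!
Two quadrics are stably birational as soon as each has a rational point over the function field
of the other: over `F = K(Q₁)`, a quadric with a rational point is rational (project from the point),
so `K(Q₁ × Q₂)` is purely transcendental over `K(Q₁)`, and symmetrically over `K(Q₂)`. Everything is
done with affine cones, after diagonalising both forms; see `diagCone_rational` and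
`diagCone_stably_birational`.

For a Pfister neighbour `q₁` of `q₂` both conditions hold. The form `q₁` is isotropic over `K(Q₁)`
by the generic point (`generic_point`), hence so is `q₂`, which contains a multiple of `q₁`
(`exists_baseChange`). Conversely, over `K(Q₂)` the Pfister form `q₂` is isotropic, hence
hyperbolic (`isPfisterLike_pfisterForm`): it has a totally isotropic subspace of half the dimension.
As `q₁` occupies a subspace of more than half the dimension, the two meet, and `q₁` is isotropic
(`isotropic_of_pfister_isotropic`).

That isotropic Pfister forms are hyperbolic is proved by induction on the number of slots together
with roundness: every nonzero value of a Pfister form is the factor of a similitude.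

The function field arguments need at least three variables, so that the cones are integral; for
`n ≤ 1` the dimension hypothesis forces `q₁` and `q₂` to be similar.
-/

noncomputable section

/-- The `n`-fold Pfister form `⟨⟨a₁,…,aₙ⟩⟩ = ⟨1,-a₁⟩ ⊗ ⋯ ⊗ ⟨1,-aₙ⟩` over `K`, written as
the diagonal quadratic form of dimension `2ⁿ`, indexed by `ε ∈ {0,1}ⁿ`, with weights
`∏_{i : ε_i = 1} (-a_i)`. -/
def pfisterForm {K : Type*} [Field K] {n : ℕ} (a : Fin n → K) :
    QuadraticForm K ((Fin n → Bool) → K) :=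
  QuadraticMap.weightedSumSquares K fun ε : Fin n → Bool => ∏ i, if ε i then -a i else 1

/-- The homogeneous degree two polynomial associated to a quadratic form `q` on `ι → K`
(`char K ≠ 2`), whose zero locus in `ℙ(ι → K)` is the projective quadric `Q = {q = 0}`. -/
def formPoly {K : Type*} [Field K] {ι : Type*} [Fintype ι] [DecidableEq ι]
    (q : QuadraticForm K (ι → K)) : MvPolynomial ι K :=
  (∑ i, MvPolynomial.C (q (Pi.single i 1)) * MvPolynomial.X i ^ 2) +
    MvPolynomial.C ((2 : K)⁻¹) *
      ∑ i, ∑ j, if i = j then 0 else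
        MvPolynomial.C (QuadraticMap.polar q (Pi.single i 1) (Pi.single j 1)) *
          MvPolynomial.X i * MvPolynomial.X j

/-- The coordinate ring of the affine cone over the projective quadric `Q = {q = 0}`
associated to a quadratic form `q`; the cone is birational over `K` to `Q × 𝔸¹`. -/
def quadricConeRing {K : Type*} [Field K] {ι : Type*} [Fintype ι] [DecidableEq ι]
    (q : QuadraticForm K (ι → K)) : Type _ :=
  MvPolynomial ι K ⧸ Ideal.span {formPoly q}

instance {K : Type*} [Field K] {ι : Type*} [Fintype ι] [DecidableEq ι]
    (q : QuadraticForm K (ι → K)) : CommRing (quadricConeRing q) := Ideal.Quotient.commRing _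

instance {K : Type*} [Field K] {ι : Type*} [Fintype ι] [DecidableEq ι]
    (q : QuadraticForm K (ι → K)) : Algebra K (quadricConeRing q) := Ideal.Quotient.algebra K

/-- Two quadratic forms `q₁, q₂` over `K` are stably birational: the associated projective
quadrics `Q₁, Q₂` satisfy `Q₁ × ℙᵃ` birational to `Q₂ × ℙᵇ` over `K` for some `a, b ≥ 0`.
Since the affine cone over `Q_i` is birational over `K` to `Q_i × 𝔸¹`, this says that the
two cones have `K`-isomorphic function fields after adjoining finitely many variables. -/
def StablyBirationalForms {K : Type*} [Field K] {ι₁ ι₂ : Type*}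
    [Fintype ι₁] [DecidableEq ι₁] [Fintype ι₂] [DecidableEq ι₂]
    (q₁ : QuadraticForm K (ι₁ → K)) (q₂ : QuadraticForm K (ι₂ → K)) : Prop :=
  ∃ a b : ℕ,
    Nonempty (FractionRing (MvPolynomial (Fin a) (quadricConeRing q₁)) ≃ₐ[K]
      FractionRing (MvPolynomial (Fin b) (quadricConeRing q₂)))

open scoped TensorProduct nonZeroDivisors

/-! ### Fraction rings of algebras, polynomial rings and tensor products -/

/-- An isomorphism of `K`-algebras extends to the total rings of fractions. -/
def fractionRingCongr {K R S : Type*} [CommRing K] [CommRing R] [CommRing S] [Algebra K R]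
    [Algebra K S] (e : R ≃ₐ[K] S) : FractionRing R ≃ₐ[K] FractionRing S :=
  IsFractionRing.algEquivOfAlgEquiv e

/-- A field `E` all of whose elements are quotients of elements of a subalgebra `R` is the field of
fractions of `R`. -/
theorem fractionRing_equiv_of_injective {K R E : Type*} [Field K] [CommRing R] [IsDomain R]
    [Field E] [Algebra K R] [Algebra K E] (g : R →ₐ[K] E) (hg : Function.Injective g)
    (hs : ∀ z : E, ∃ x y : R, z = g x / g y) :
    Nonempty (FractionRing R ≃ₐ[K] E) := by
  let := g.toRingHom.toAlgebra
  have : IsScalarTower K R E := IsScalarTower.of_algebraMap_eq fun x => (g.commutes x).symm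
  have : FaithfulSMul R E := (faithfulSMul_iff_algebraMap_injective R E).2 hg
  have : IsFractionRing R E := IsFractionRing.of_field R E hs
  exact ⟨(FractionRing.algEquiv R E).restrictScalars K⟩

theorem fractionRing_equiv_of_localization {K R S : Type*} [Field K] [CommRing R] [IsDomain R]
    [CommRing S] [IsDomain S] [Algebra K R] [Algebra K S] [Algebra R S] [IsScalarTower K R S]
    (M : Submonoid R) [IsLocalization M S] (hM : Function.Injective (algebraMap R S)) :
    Nonempty (FractionRing R ≃ₐ[K] FractionRing S) := by
  refine fractionRing_equiv_of_injective
    ((IsScalarTower.toAlgHom K S (FractionRing S)).comp (IsScalarTower.toAlgHom K R S)) ?_ ?_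
  · exact (IsFractionRing.injective S (FractionRing S)).comp hM
  · intro z
    obtain ⟨s, t, ht, rfl⟩ := IsFractionRing.div_surjective (A := S) z
    obtain ⟨⟨x, m⟩, hx⟩ := IsLocalization.surj M s
    obtain ⟨⟨y, m'⟩, hy⟩ := IsLocalization.surj M t
    have hm := (IsLocalization.map_units S m).map (algebraMap S (FractionRing S))
    have hm' := (IsLocalization.map_units S m').map (algebraMap S (FractionRing S))
    have ht' : algebraMap S (FractionRing S) t ≠ 0 := by
      simpa using nonZeroDivisors.ne_zero ht
    refine ⟨x * m', y * m, ?_⟩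
    have hx' := congrArg (algebraMap S (FractionRing S)) hx
    have hy' := congrArg (algebraMap S (FractionRing S)) hy
    simp only [map_mul] at hx' hy'
    simp only [AlgHom.comp_apply, IsScalarTower.coe_toAlgHom', map_mul, ← hx', ← hy']
    have h1 := hm.ne_zero
    have h2 := hm'.ne_zero
    field_simp

theorem fractionRing_mvPolynomial_equiv (K A : Type*) (σ : Type*) [Field K] [CommRing A]
    [IsDomain A] [Algebra K A] :
    Nonempty (FractionRing (MvPolynomial σ A) ≃ₐ[K]
      FractionRing (MvPolynomial σ (FractionRing A))) := by
  let : Algebra (MvPolynomial σ A) (MvPolynomial σ (FractionRing A)) :=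
    MvPolynomial.algebraMvPolynomial
  have : IsScalarTower K (MvPolynomial σ A) (MvPolynomial σ (FractionRing A)) := by
    refine IsScalarTower.of_algebraMap_eq fun x => ?_
    rw [MvPolynomial.algebraMap_def, MvPolynomial.algebraMap_apply, MvPolynomial.algebraMap_apply,
      MvPolynomial.map_C, ← IsScalarTower.algebraMap_apply]
  refine fractionRing_equiv_of_localization (A⁰.map (MvPolynomial.C (σ := σ))) ?_
  exact MvPolynomial.map_injective _ (IsFractionRing.injective A (FractionRing A))

theorem tensor_map_injective {K A F B : Type*} [Field K] [CommRing A] [Algebra K A] [CommRing F]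
    [Algebra K F] [Algebra A F] [IsScalarTower K A F] [CommRing B] [Algebra K B]
    (h : Function.Injective (algebraMap A F)) :
    Function.Injective (Algebra.TensorProduct.map (IsScalarTower.toAlgHom K A F)
      (AlgHom.id K B)) := by
  exact Module.Flat.rTensor_preserves_injective_linearMap (M := B)
    (IsScalarTower.toAlgHom K A F).toLinearMap h

/-- Replacing one tensor factor by its field of fractions does not change the function field of a
product. -/
theorem fractionRing_tensor_equiv (K A B : Type*) [Field K] [CommRing A] [IsDomain A]
    [Algebra K A] [CommRing B] [Algebra K B] [IsDomain (FractionRing A ⊗[K] B)] :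
    IsDomain (A ⊗[K] B) ∧
    Nonempty (FractionRing (A ⊗[K] B) ≃ₐ[K] FractionRing (FractionRing A ⊗[K] B)) := by
  let F := FractionRing A
  let g := Algebra.TensorProduct.map (IsScalarTower.toAlgHom K A F) (AlgHom.id K B)
  have hg : Function.Injective g := tensor_map_injective (IsFractionRing.injective A F)
  have hd : IsDomain (A ⊗[K] B) := hg.isDomain g.toRingHom
  refine ⟨hd, ?_⟩
  let : Algebra (A ⊗[K] B) (F ⊗[K] B) := g.toRingHom.toAlgebra
  have : IsScalarTower K (A ⊗[K] B) (F ⊗[K] B) :=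
    IsScalarTower.of_algebraMap_eq fun x => (g.commutes x).symm
  have : IsLocalization (Algebra.algebraMapSubmonoid (A ⊗[K] B) A⁰) (F ⊗[K] B) :=
    have : IsScalarTower A (A ⊗[K] B) (F ⊗[K] B) := by
      refine IsScalarTower.of_algebraMap_eq fun x => ?_
      change algebraMap A F x ⊗ₜ[K] 1 = g (x ⊗ₜ[K] 1)
      simp [g]
    IsLocalization.tensorProduct_tensorProduct K B A⁰ F (by
      ext x
      change g (1 ⊗ₜ[K] x) = 1 ⊗ₜ[K] x
      simp [g])
  exact fractionRing_equiv_of_localization (Algebra.algebraMapSubmonoid (A ⊗[K] B) A⁰) hg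

/-! ### Rationality of isotropic diagonal cones -/

/-- The diagonal quadratic polynomial `∑ wᵢ Xᵢ²`. -/
def diagPoly {R ι : Type*} [CommRing R] [Fintype ι] (w : ι → R) : MvPolynomial ι R :=
  ∑ i, MvPolynomial.C (w i) * MvPolynomial.X i ^ 2

/-- The coordinate ring of the affine cone `∑ wᵢ xᵢ² = 0`. -/
abbrev DiagCone {R ι : Type*} [CommRing R] [Fintype ι] (w : ι → R) : Type _ :=
  MvPolynomial ι R ⧸ Ideal.span {diagPoly w}

theorem map_diagPoly {R S ι : Type*} [CommRing R] [CommRing S] [Fintype ι] (f : R →+* S)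
    (w : ι → R) : MvPolynomial.map f (diagPoly w) = diagPoly (f ∘ w) := by
  simp [diagPoly]

theorem tensor_diagCone_equiv {K F ι : Type*} [Field K] [CommRing F] [Algebra K F] [Fintype ι]
    (w : ι → K) :
    Nonempty ((F ⊗[K] DiagCone w) ≃ₐ[F] DiagCone (algebraMap K F ∘ w)) := by
  refine ⟨(Algebra.TensorProduct.tensorQuotientEquiv F (MvPolynomial ι K) F _).trans
    (Ideal.quotientEquivAlg _ _ (MvPolynomial.algebraTensorAlgEquiv K F) ?_)⟩
  rw [Ideal.map_span, Set.image_singleton, Ideal.map_span, Set.image_singleton]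
  congr 2
  simp [map_diagPoly]

theorem prime_and_fractionRing_equiv_of_ker {K Q E : Type*} [Field K] [CommRing Q] [Field E]
    [Algebra K Q] [Algebra K E] (g : Q →ₐ[K] E) (I : Ideal Q) (hI : RingHom.ker g = I)
    (hs : ∀ z : E, ∃ x y : Q, z = g x / g y) :
    I.IsPrime ∧ Nonempty (FractionRing (Q ⧸ I) ≃ₐ[K] E) := by
  subst hI
  have hp : (RingHom.ker g).IsPrime := RingHom.ker_isPrime g
  refine ⟨hp, fractionRing_equiv_of_injective (Ideal.kerLiftAlg g)
    (Ideal.kerLiftAlg_injective g) fun z => ?_⟩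
  obtain ⟨x, y, rfl⟩ := hs z
  exact ⟨Ideal.Quotient.mk _ x, Ideal.Quotient.mk _ y, rfl⟩

/-- Pseudo-division by the linear polynomial `a X + b`: after multiplication by a power of `a`, the
remainder is a constant. -/
theorem pseudo_division {P : Type*} [CommRing P] (a b : P) (p : Polynomial P) :
    ∃ (k : ℕ) (r : P), (Polynomial.C a * Polynomial.X + Polynomial.C b) ∣
      Polynomial.C a ^ k * p - Polynomial.C r := by
  induction p using Polynomial.induction_on' with
  | add p q hp hq =>
    obtain ⟨k, r, c, hc⟩ := hp
    obtain ⟨l, s, d, hd⟩ := hq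
    refine ⟨k + l, a ^ l * r + a ^ k * s, Polynomial.C a ^ l * c + Polynomial.C a ^ k * d, ?_⟩
    simp only [map_add, map_mul, map_pow]
    linear_combination Polynomial.C a ^ l * hc + Polynomial.C a ^ k * hd
  | monomial n c =>
    refine ⟨n, c * (-b) ^ n, ?_⟩
    obtain ⟨d, hd⟩ := sub_dvd_pow_sub_pow (Polynomial.C a * Polynomial.X) (-Polynomial.C b) n
    refine ⟨Polynomial.C c * d, ?_⟩
    rw [← Polynomial.C_mul_X_pow_eq_monomial]
    simp only [map_mul, map_pow, map_neg]
    linear_combination Polynomial.C c * hd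

/-- If the prime `a` does not divide `b`, then `a X + b` is primitive, so a polynomial vanishing at
`-b / a` is divisible by it already over `P` (Gauss). -/
theorem dvd_of_aeval_eq_zero {P E : Type*} [CommRing P] [IsDomain P] [Field E] [Algebra P E]
    [IsFractionRing P E] {a b : P} (ha : Prime a) (hab : ¬ a ∣ b) (p : Polynomial P)
    (hp : Polynomial.aeval (-algebraMap P E b / algebraMap P E a) p = 0) :
    (Polynomial.C a * Polynomial.X + Polynomial.C b) ∣ p := by
  have ha0 : algebraMap P E a ≠ 0 := by simpa using ha.ne_zero
  have hroot : Polynomial.aeval (-algebraMap P E b / algebraMap P E a)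
      (Polynomial.C a * Polynomial.X + Polynomial.C b) = 0 := by
    simp [Polynomial.aeval_C]
    field_simp
    ring
  obtain ⟨k, r, hr⟩ := pseudo_division a b p
  have hr0 : r = 0 := by
    obtain ⟨c, hc⟩ := hr
    have := congrArg (Polynomial.aeval (-algebraMap P E b / algebraMap P E a)) hc
    rw [map_mul, hroot, map_sub, map_mul, hp] at this
    simpa [Polynomial.aeval_C] using this
  subst hr0
  rw [map_zero, sub_zero] at hr
  have hCa : Prime (Polynomial.C a) := Polynomial.prime_C_iff.2 ha
  have hnd : ¬ Polynomial.C a ∣ Polynomial.C a * Polynomial.X + Polynomial.C b := by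
    intro h
    rw [dvd_add_right (dvd_mul_right _ _), Polynomial.C_dvd_iff_dvd_coeff] at h
    exact hab (by simpa using h 0)
  induction k with
  | zero => simpa using hr
  | succ k ih =>
    apply ih
    obtain ⟨s, hs⟩ := hr
    have : Polynomial.C a ∣ (Polynomial.C a * Polynomial.X + Polynomial.C b) * s :=
      ⟨Polynomial.C a ^ k * p, by rw [← hs]; ring⟩
    obtain ⟨t, rfl⟩ := (hCa.dvd_or_dvd this).resolve_left hnd
    refine ⟨t, mul_left_cancel₀ hCa.ne_zero ?_⟩
    linear_combination hs

theorem ker_aeval_linear {P E : Type*} [CommRing P] [IsDomain P] [Field E] [Algebra P E]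
    [IsFractionRing P E] {a b : P} (ha : Prime a) (hab : ¬ a ∣ b) :
    RingHom.ker (Polynomial.aeval (R := P) (-algebraMap P E b / algebraMap P E a)) =
      Ideal.span {Polynomial.C a * Polynomial.X + Polynomial.C b} := by
  have ha0 : algebraMap P E a ≠ 0 := by simpa using ha.ne_zero
  ext p
  rw [RingHom.mem_ker, Ideal.mem_span_singleton]
  refine ⟨dvd_of_aeval_eq_zero ha hab p, ?_⟩
  rintro ⟨c, rfl⟩
  rw [map_mul]
  simp only [map_add, map_mul, Polynomial.aeval_C, Polynomial.aeval_X]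
  field_simp
  ring

/-- The linear change of variables which moves the vector `(0, …, 0, 1)`, with `1` at the index
`none`, to `v`: substitute `X none ↦ v none * X none` and `X i ↦ X i + v i * X none`. -/
def moveNone {F σ : Type*} [Field F] (v : Option σ → F) (hv : v none ≠ 0) :
    MvPolynomial (Option σ) F ≃ₐ[F] MvPolynomial (Option σ) F :=
  AlgEquiv.ofAlgHom
    (MvPolynomial.aeval fun i => Option.elim i
      (MvPolynomial.C (v none) * MvPolynomial.X none)
      fun i => MvPolynomial.X (some i) + MvPolynomial.C (v (some i)) * MvPolynomial.X none)
    (MvPolynomial.aeval fun i => Option.elim i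
      (MvPolynomial.C (v none)⁻¹ * MvPolynomial.X none)
      fun i => MvPolynomial.X (some i) -
        MvPolynomial.C (v (some i) * (v none)⁻¹) * MvPolynomial.X none)
    (by
      ext i : 1
      cases i with
      | none =>
        simp only [AlgHom.comp_apply, MvPolynomial.aeval_X, Option.elim, map_mul,
          MvPolynomial.algHom_C, MvPolynomial.algebraMap_eq, AlgHom.id_apply, ← mul_assoc]
        rw [← map_mul, inv_mul_cancel₀ hv, map_one, one_mul]
      | some i =>
        simp only [AlgHom.comp_apply, MvPolynomial.aeval_X, Option.elim, map_mul, map_sub,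
          MvPolynomial.algHom_C, MvPolynomial.algebraMap_eq, AlgHom.id_apply]
        have h : MvPolynomial.C (σ := Option σ) (v none)⁻¹ * MvPolynomial.C (v none) = 1 := by
          rw [← map_mul, inv_mul_cancel₀ hv, map_one]
        linear_combination
          (-MvPolynomial.C (σ := Option σ) (v (some i)) * MvPolynomial.X none) * h)
    (by
      ext i : 1
      have h : MvPolynomial.C (σ := Option σ) (v none)⁻¹ * MvPolynomial.C (v none) = 1 := by
          rw [← map_mul, inv_mul_cancel₀ hv, map_one]
      cases i with
      | none =>
        simp only [AlgHom.comp_apply, MvPolynomial.aeval_X, Option.elim, map_mul,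
          MvPolynomial.algHom_C, MvPolynomial.algebraMap_eq, AlgHom.id_apply]
        linear_combination MvPolynomial.X none * h
      | some i =>
        simp only [AlgHom.comp_apply, MvPolynomial.aeval_X, Option.elim, map_mul, map_add,
          MvPolynomial.algHom_C, MvPolynomial.algebraMap_eq, AlgHom.id_apply]
        ring)

/-- When `v` is isotropic, the quadratic polynomial becomes linear in the variable `none` after
the change of variables `moveNone`. -/
theorem optionEquivLeft_moveNone_diagPoly {F σ : Type*} [Field F] [Fintype σ]
    (w v : Option σ → F) (hv : v none ≠ 0) (hq : ∑ i, w i * v i ^ 2 = 0) :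
    MvPolynomial.optionEquivLeft F σ (moveNone v hv (diagPoly w)) =
      Polynomial.C (∑ i, MvPolynomial.C (2 * w (some i) * v (some i)) * MvPolynomial.X i) *
        Polynomial.X + Polynomial.C (diagPoly fun i => w (some i)) := by
  have hX : ∀ i, moveNone v hv (MvPolynomial.X i) = Option.elim i
      (MvPolynomial.C (v none) * MvPolynomial.X none)
      fun i => MvPolynomial.X (some i) + MvPolynomial.C (v (some i)) * MvPolynomial.X none := by
    intro i
    simp [moveNone]
  have hC : ∀ c, moveNone v hv (MvPolynomial.C c) = MvPolynomial.C c := fun c => by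
    simpa using (moveNone v hv).commutes c
  have hq' := congrArg (fun x => Polynomial.C (MvPolynomial.C (σ := σ) x)) hq
  simp only [Fintype.sum_option, map_add, map_mul, map_sum, map_pow, map_zero] at hq'
  simp only [diagPoly, map_sum, map_mul, map_pow, Fintype.sum_option, map_add, hX, hC,
    Option.elim, MvPolynomial.optionEquivLeft_C, MvPolynomial.optionEquivLeft_X_none,
    MvPolynomial.optionEquivLeft_X_some, Finset.sum_mul]
  rw [← Finset.sum_add_distrib, add_comm]
  have : ∀ x y z t : Polynomial (MvPolynomial σ F), z + t = 0 → x - t * Polynomial.X ^ 2 = y →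
      x + z * Polynomial.X ^ 2 = y := by
    intro x y z t h1 h2
    linear_combination h2 + Polynomial.X ^ 2 * h1
  rw [mul_pow, ← mul_assoc]
  refine this _ _ _ _ hq' ?_
  rw [Finset.sum_mul, ← Finset.sum_sub_distrib]
  refine Finset.sum_congr rfl fun i _ => ?_
  simp only [map_ofNat]
  ring

/-- If `v` is anisotropic, the form does not vanish identically on the hyperplane orthogonal to
`v`; hence the linear form `⟨v, -⟩` does not divide the quadratic polynomial. -/
theorem exists_vanishing_not_isotropic {F σ : Type*} [Field F] [Fintype σ] [DecidableEq σ]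
    (h2 : (2 : F) ≠ 0) (hσ : 2 ≤ Fintype.card σ)
    (w v : σ → F) (hw : ∀ i, w i ≠ 0) (hq : ∑ i, w i * v i ^ 2 ≠ 0) :
    ∃ y : σ → F, ∑ i, w i * v i * y i = 0 ∧ ∑ i, w i * y i ^ 2 ≠ 0 := by
  by_contra! hcon
  -- test vectors supported on two indices
  have key : ∀ i k, i ≠ k → w i * v i ^ 2 + w k * v k ^ 2 = 0 := by
    intro i k hik
    have h1 : ∀ f : σ → F, (∀ l, l ≠ i → l ≠ k → f l = 0) → ∑ l, f l = f i + f k := by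
      intro f hf
      rw [← Finset.sum_pair hik]
      refine (Finset.sum_subset (Finset.subset_univ _) ?_).symm
      intro l _ hl
      simp only [Finset.mem_insert, Finset.mem_singleton, not_or] at hl
      exact hf l hl.1 hl.2
    have := hcon (fun l => if l = i then w k * v k else if l = k then -(w i * v i) else 0) (by
      rw [h1 _ (by intro l hl hl'; simp [hl, hl'])]
      simp [hik.symm]
      ring)
    rw [h1 _ (by intro l hl hl'; simp [hl, hl'])] at this
    simp only [if_true, hik.symm, if_false] at this
    have h3 : (w i * w k) * (w i * v i ^ 2 + w k * v k ^ 2) = 0 := by linear_combination this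
    simpa [hw i, hw k] using h3
  obtain ⟨i, k, hik⟩ := Fintype.one_lt_card_iff.1 hσ
  by_cases h3 : ∃ l, l ≠ i ∧ l ≠ k
  · -- three distinct indices force all terms to vanish
    have hz : ∀ l, w l * v l ^ 2 = 0 := by
      have hall : ∀ p q r, p ≠ q → p ≠ r → q ≠ r → w p * v p ^ 2 = 0 := by
        intro p q r a b c
        have : 2 * (w p * v p ^ 2) = 0 := by
          linear_combination key p q a + key p r b - key q r c
        exact (mul_eq_zero.1 this).resolve_left h2
      obtain ⟨l, hl, hl'⟩ := h3
      intro p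
      by_cases hp : p = i
      · subst hp; exact hall p k l hik hl.symm hl'.symm
      by_cases hp' : p = k
      · subst hp'; exact hall p i l hik.symm hl'.symm hl.symm
      · exact hall p i k hp hp' hik
    exact hq (Finset.sum_eq_zero fun l _ => hz l)
  · push Not at h3
    apply hq
    rw [← key i k hik, ← Finset.sum_pair (f := fun l => w l * v l ^ 2) hik]
    refine (Finset.sum_subset (Finset.subset_univ _) ?_).symm
    intro l _ hl
    simp only [Finset.mem_insert, Finset.mem_singleton, not_or] at hl
    exact absurd (h3 l hl.1) hl.2

/-- Projection from an isotropic vector `v`: in suitable coordinates the equation of the cone is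
`a X + b = 0` with `a` a linear form not dividing `b`, so it can be solved for `X = -b / a`. -/
theorem diagCone_option_rational {F σ : Type*} [Field F] [Fintype σ]
    (h2 : (2 : F) ≠ 0) (hσ : 2 ≤ Fintype.card σ)
    (w v : Option σ → F) (hw : ∀ i, w i ≠ 0) (hv : v none ≠ 0) (hq : ∑ i, w i * v i ^ 2 = 0) :
    (Ideal.span {diagPoly w}).IsPrime ∧
      Nonempty (FractionRing (DiagCone w) ≃ₐ[F] FractionRing (MvPolynomial σ F)) := by
  classical
  let P := MvPolynomial σ F
  let E := FractionRing P
  let a : P := ∑ i, MvPolynomial.C (2 * w (some i) * v (some i)) * MvPolynomial.X i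
  let b : P := diagPoly fun i => w (some i)
  have hq' : ∑ i, w (some i) * v (some i) ^ 2 ≠ 0 := by
    intro h
    rw [Fintype.sum_option, h, add_zero] at hq
    exact mul_ne_zero (hw none) (pow_ne_zero 2 hv) hq
  have ha : Prime a := by
    obtain ⟨i, -, hi⟩ := Finset.exists_ne_zero_of_sum_ne_zero hq'
    have hvi : 2 * w (some i) * v (some i) ≠ 0 := by
      refine mul_ne_zero (mul_ne_zero h2 (hw _)) ?_
      rintro h
      simp [h] at hi
    let c : σ →₀ F := Finsupp.equivFunOnFinite.symm fun i => 2 * w (some i) * v (some i)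
    have hac : a = MvPolynomial.sumSMulX c := by
      simp [a, MvPolynomial.sumSMulX, Finsupp.linearCombination_apply, Finsupp.sum_fintype, c,
        MvPolynomial.smul_eq_C_mul]
    rw [hac]
    refine (MvPolynomial.irreducible_sumSMulX c ⟨i, ?_⟩ ?_).prime
    · rw [Finsupp.mem_support_iff]; exact hvi
    · intro r hr
      exact isUnit_of_dvd_unit (hr i) (IsUnit.mk0 _ hvi)
  have hab : ¬ a ∣ b := by
    rintro ⟨d, hd⟩
    obtain ⟨y, hy, hy'⟩ := exists_vanishing_not_isotropic h2 hσ (fun i => w (some i))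
      (fun i => v (some i)) (fun i => hw _) hq'
    have := congrArg (MvPolynomial.eval y) hd
    apply hy'
    have hay : MvPolynomial.eval y a = 0 := by
      simp only [a, map_sum, map_mul, MvPolynomial.eval_C, MvPolynomial.eval_X, mul_assoc,
        ← Finset.mul_sum] at hy ⊢
      rw [hy, mul_zero]
    rw [map_mul, hay, zero_mul] at this
    simpa [b, diagPoly] using this
  let Φ : MvPolynomial (Option σ) F ≃ₐ[F] Polynomial P :=
    (moveNone v hv).trans (MvPolynomial.optionEquivLeft F σ)
  have hΦ : Φ (diagPoly w) = Polynomial.C a * Polynomial.X + Polynomial.C b :=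
    optionEquivLeft_moveNone_diagPoly w v hv hq
  let g : Polynomial P →ₐ[P] E := Polynomial.aeval (-algebraMap P E b / algebraMap P E a)
  have hker := ker_aeval_linear (E := E) ha hab
  refine prime_and_fractionRing_equiv_of_ker ((g.restrictScalars F).comp Φ.toAlgHom) _ ?_ ?_
  · ext p
    have : Φ p ∈ RingHom.ker g ↔ Φ p ∈ Ideal.span {Φ (diagPoly w)} := by
      rw [hΦ, ← hker]
    rw [Ideal.mem_span_singleton, map_dvd_iff, ← Ideal.mem_span_singleton] at this
    exact this
  · intro z
    obtain ⟨x, y, -, rfl⟩ := IsFractionRing.div_surjective (A := P) z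
    refine ⟨Φ.symm (Polynomial.C x), Φ.symm (Polynomial.C y), ?_⟩
    simp [g]

/-- The cone over an isotropic quadric of dimension at least one is integral and rational. -/
theorem diagCone_rational {F ι : Type*} [Field F] [Fintype ι]
    (h2 : (2 : F) ≠ 0) (hι : 3 ≤ Fintype.card ι)
    (w v : ι → F) (hw : ∀ i, w i ≠ 0) (hv : v ≠ 0) (hq : ∑ i, w i * v i ^ 2 = 0) :
    (Ideal.span {diagPoly w}).IsPrime ∧
      Nonempty (FractionRing (DiagCone w) ≃ₐ[F]
        FractionRing (MvPolynomial (Fin (Fintype.card ι - 1)) F)) := by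
  classical
  obtain ⟨i₀, hi₀⟩ := Function.ne_iff.1 hv
  let σ := {i // i ≠ i₀}
  let e : Option σ ≃ ι := Equiv.optionSubtypeNe i₀
  have hcard : Fintype.card σ = Fintype.card ι - 1 := by
    rw [← Fintype.card_congr e, Fintype.card_option]; rfl
  obtain ⟨hp, ⟨f⟩⟩ := diagCone_option_rational h2 (by omega) (w ∘ e) (v ∘ e) (fun i => hw _)
    (by
      change v (Equiv.optionSubtypeNe i₀ none) ≠ 0
      rwa [Equiv.optionSubtypeNe_none])
    (by rw [← hq]; exact Equiv.sum_comp e fun i => w i * v i ^ 2)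
  have hren : MvPolynomial.renameEquiv F e (diagPoly (w ∘ e)) = diagPoly w := by
    simp only [diagPoly, map_sum, map_mul, map_pow, MvPolynomial.renameEquiv_apply,
      MvPolynomial.rename_C, MvPolynomial.rename_X]
    exact Equiv.sum_comp e fun i => MvPolynomial.C (w i) * MvPolynomial.X i ^ 2
  let e' : DiagCone (w ∘ e) ≃ₐ[F] DiagCone w :=
    Ideal.quotientEquivAlg _ _ (MvPolynomial.renameEquiv F e) (by
      rw [Ideal.map_span, Set.image_singleton]
      congr 2
      exact hren.symm)
  have hd : IsDomain (DiagCone (w ∘ e)) := Ideal.Quotient.isDomain _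
  have hd' : IsDomain (DiagCone w) := e'.symm.toMulEquiv.isDomain _
  refine ⟨(Ideal.Quotient.isDomain_iff_prime _).1 hd', ⟨?_⟩⟩
  exact ((IsFractionRing.algEquivOfAlgEquiv e').symm.trans f).trans
    (IsFractionRing.algEquivOfAlgEquiv (MvPolynomial.renameEquiv F
      (Fintype.equivFinOfCardEq hcard)))

/-! ### Stable birationality from mutual isotropy -/

theorem exists_isotropic_of_isAlgClosed {L ι : Type*} [Field L] [IsAlgClosed L] [Fintype ι]
    (hι : 2 ≤ Fintype.card ι) (w : ι → L) (hw : ∀ i, w i ≠ 0) :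
    ∃ v : ι → L, v ≠ 0 ∧ ∑ i, w i * v i ^ 2 = 0 := by
  classical
  obtain ⟨i, k, hik⟩ := Fintype.one_lt_card_iff.1 hι
  obtain ⟨z, hz⟩ := IsAlgClosed.exists_pow_nat_eq (-(w i / w k)) (n := 2) (by norm_num)
  refine ⟨fun l => if l = i then 1 else if l = k then z else 0, ?_, ?_⟩
  · intro h
    simpa using congrFun h i
  · rw [← Finset.sum_subset (Finset.subset_univ {i, k}), Finset.sum_pair hik]
    · simp only [if_true, hik.symm, if_false, hz]
      have := hw k
      field_simp
      ring
    · intro l _ hl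
      simp only [Finset.mem_insert, Finset.mem_singleton, not_or] at hl
      simp [hl.1, hl.2]

/-- Integrality descends from an algebraic closure, over which the form is isotropic. -/
theorem isDomain_diagCone {K ι : Type*} [Field K] [Fintype ι] (h2 : (2 : K) ≠ 0)
    (hι : 3 ≤ Fintype.card ι) (w : ι → K) (hw : ∀ i, w i ≠ 0) : IsDomain (DiagCone w) := by
  let L := AlgebraicClosure K
  have hw' : ∀ i, (algebraMap K L ∘ w) i ≠ 0 := fun i => by simpa using hw i
  have h2' : (2 : L) ≠ 0 := by
    rw [← map_ofNat (algebraMap K L) 2]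
    exact (map_ne_zero (algebraMap K L)).2 h2
  obtain ⟨v, hv, hq⟩ := exists_isotropic_of_isAlgClosed (by omega) _ hw'
  obtain ⟨hp, -⟩ := diagCone_rational h2' hι _ v hw' hv hq
  have hd : IsDomain (DiagCone (algebraMap K L ∘ w)) := Ideal.Quotient.isDomain _
  obtain ⟨e⟩ := tensor_diagCone_equiv (F := L) w
  have hd' : IsDomain (L ⊗[K] DiagCone w) := e.toMulEquiv.isDomain _
  have hinj : Function.Injective
      (Algebra.TensorProduct.includeRight : DiagCone w →ₐ[K] L ⊗[K] DiagCone w) :=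
    Algebra.TensorProduct.includeRight_injective (algebraMap K L).injective
  exact hinj.isDomain
    (Algebra.TensorProduct.includeRight : DiagCone w →ₐ[K] L ⊗[K] DiagCone w).toRingHom

/-- If the form `w` is isotropic over the fraction field of `A`, then its cone becomes rational over
that field, so the function field of the product of `Spec A` with the cone is purely
transcendental over that of `Spec A`. -/
theorem fractionRing_diagCone_tensor {K A ι : Type*} [Field K] [CommRing A] [IsDomain A]
    [Algebra K A] [Fintype ι] (h2 : (2 : K) ≠ 0) (hι : 3 ≤ Fintype.card ι)
    (w : ι → K) (hw : ∀ i, w i ≠ 0) (v : ι → FractionRing A) (hv : v ≠ 0)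
    (hq : ∑ i, algebraMap K (FractionRing A) (w i) * v i ^ 2 = 0) :
    Nonempty (FractionRing (A ⊗[K] DiagCone w) ≃ₐ[K]
      FractionRing (MvPolynomial (Fin (Fintype.card ι - 1)) A)) := by
  let F := FractionRing A
  have hw' : ∀ i, (algebraMap K F ∘ w) i ≠ 0 := fun i => by simpa using hw i
  have h2' : (2 : F) ≠ 0 := by
    rw [← map_ofNat (algebraMap K F) 2]
    exact (map_ne_zero (algebraMap K F)).2 h2
  obtain ⟨hp, ⟨f⟩⟩ := diagCone_rational h2' hι _ v hw' hv hq
  have hd : IsDomain (DiagCone (algebraMap K F ∘ w)) := Ideal.Quotient.isDomain _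
  obtain ⟨e⟩ := tensor_diagCone_equiv (F := F) w
  have hd' : IsDomain (F ⊗[K] DiagCone w) := e.toMulEquiv.isDomain _
  obtain ⟨-, ⟨g⟩⟩ := fractionRing_tensor_equiv K A (DiagCone w)
  obtain ⟨h⟩ := fractionRing_mvPolynomial_equiv K A (Fin (Fintype.card ι - 1))
  let e' : FractionRing (F ⊗[K] DiagCone w) ≃ₐ[F] FractionRing (DiagCone (algebraMap K F ∘ w)) :=
    fractionRingCongr (R := F ⊗[K] DiagCone w) e
  exact ⟨(g.trans ((e'.trans f).restrictScalars K)).trans h.symm⟩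

/-- Every form is isotropic over the function field of its own cone. -/
theorem generic_point {K ι : Type*} [Field K] [Fintype ι] (h2 : (2 : K) ≠ 0)
    (hι : 3 ≤ Fintype.card ι) (w : ι → K) (hw : ∀ i, w i ≠ 0) :
    ∃ v : ι → FractionRing (DiagCone w), v ≠ 0 ∧
      ∑ i, algebraMap K (FractionRing (DiagCone w)) (w i) * v i ^ 2 = 0 := by
  have := isDomain_diagCone h2 hι w hw
  let F := FractionRing (DiagCone w)
  let g : MvPolynomial ι K →ₐ[K] F := (IsScalarTower.toAlgHom K (DiagCone w) F).comp
    (Ideal.Quotient.mkₐ K _)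
  have hker : ∀ p, g p = 0 → diagPoly w ∣ p := by
    intro p hp
    have h1 : algebraMap (DiagCone w) F (Ideal.Quotient.mk _ p) = 0 := hp
    rw [IsFractionRing.to_map_eq_zero_iff] at h1
    exact Ideal.mem_span_singleton.1 (Ideal.Quotient.eq_zero_iff_mem.1 h1)
  have hg0 : g (diagPoly w) = 0 := by
    have : (Ideal.Quotient.mk (Ideal.span {diagPoly w}) (diagPoly w)) = 0 :=
      Ideal.Quotient.eq_zero_iff_mem.2 (Ideal.mem_span_singleton_self _)
    change algebraMap (DiagCone w) F (Ideal.Quotient.mk _ (diagPoly w)) = 0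
    rw [this, map_zero]
  refine ⟨fun i => g (MvPolynomial.X i), ?_, ?_⟩
  · intro h
    -- otherwise the quadratic polynomial would divide the variable `X i`, which is impossible
    -- because it vanishes to second order at the origin
    obtain ⟨i⟩ : Nonempty ι := Fintype.card_pos_iff.1 (by omega)
    obtain ⟨c, hc⟩ := hker _ (congrFun h i)
    classical
    have := congrArg (MvPolynomial.pderiv i) hc
    have h0 := congrArg (MvPolynomial.eval (0 : ι → K)) this
    simp [diagPoly, MvPolynomial.pderiv_X, Pi.single_apply] at h0
  · have := hg0
    simp only [diagPoly, map_sum, map_mul, map_pow] at this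
    rw [← this]
    refine Finset.sum_congr rfl fun i _ => ?_
    congr 1

/-- Two forms, each isotropic over the function field of the other, are stably birational: both
function fields become isomorphic to that of the product after adjoining variables. -/
theorem diagCone_stably_birational {K ι₁ ι₂ : Type*} [Field K] [Fintype ι₁] [Fintype ι₂]
    (h2 : (2 : K) ≠ 0) (h₁ : 3 ≤ Fintype.card ι₁) (h₂ : 3 ≤ Fintype.card ι₂)
    (w₁ : ι₁ → K) (w₂ : ι₂ → K) (hw₁ : ∀ i, w₁ i ≠ 0) (hw₂ : ∀ i, w₂ i ≠ 0)
    (h₂₁ : ∃ v : ι₂ → FractionRing (DiagCone w₁), v ≠ 0 ∧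
      ∑ i, algebraMap K (FractionRing (DiagCone w₁)) (w₂ i) * v i ^ 2 = 0)
    (h₁₂ : ∃ v : ι₁ → FractionRing (DiagCone w₂), v ≠ 0 ∧
      ∑ i, algebraMap K (FractionRing (DiagCone w₂)) (w₁ i) * v i ^ 2 = 0) :
    ∃ a b : ℕ, Nonempty (FractionRing (MvPolynomial (Fin a) (DiagCone w₁)) ≃ₐ[K]
      FractionRing (MvPolynomial (Fin b) (DiagCone w₂))) := by
  have d₁ := isDomain_diagCone h2 h₁ w₁ hw₁
  have d₂ := isDomain_diagCone h2 h₂ w₂ hw₂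
  obtain ⟨v, hv, hq⟩ := h₂₁
  obtain ⟨v', hv', hq'⟩ := h₁₂
  obtain ⟨e₁⟩ := fractionRing_diagCone_tensor h2 h₂ w₂ hw₂ v hv hq
  obtain ⟨e₂⟩ := fractionRing_diagCone_tensor h2 h₁ w₁ hw₁ v' hv' hq'
  exact ⟨_, _, ⟨(e₁.symm.trans (fractionRingCongr (R := DiagCone w₁ ⊗[K] DiagCone w₂)
    (S := DiagCone w₂ ⊗[K] DiagCone w₁)
    (Algebra.TensorProduct.comm K (DiagCone w₁) (DiagCone w₂)))).trans e₂⟩⟩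

/-! ### Isotropic Pfister forms are hyperbolic -/

/-- The properties of Pfister forms which are carried through the induction on the number of
slots: nondegeneracy, roundness (every nonzero value is the factor of a similitude), and the
existence of a totally isotropic subspace of half the dimension once the form is isotropic. -/
structure IsPfisterLike {F V : Type*} [Field F] [AddCommGroup V] [Module F V]
    (Q : QuadraticForm F V) : Prop where
  nondeg : ∀ x, (∀ y, QuadraticMap.polar Q x y = 0) → x = 0
  round : ∀ x, Q x ≠ 0 → ∃ M : V ≃ₗ[F] V, ∀ w, Q (M w) = Q x * Q w
  lagrangian : (∃ x, x ≠ 0 ∧ Q x = 0) → ∃ W : Submodule F V, (∀ w ∈ W, Q w = 0) ∧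
    2 * Module.finrank F W = Module.finrank F V

section Pfister

variable {F V V' : Type*} [Field F] [AddCommGroup V] [Module F V] [AddCommGroup V'] [Module F V']

theorem IsPfisterLike.of_isometry {Q : QuadraticForm F V} {Q' : QuadraticForm F V'}
    (h : IsPfisterLike Q) (e : V' ≃ₗ[F] V) (he : ∀ x, Q (e x) = Q' x) : IsPfisterLike Q' := by
  have hp : ∀ x y, QuadraticMap.polar Q (e x) (e y) = QuadraticMap.polar Q' x y := by
    intro x y
    simp [QuadraticMap.polar, ← he]
  refine ⟨fun x hx => ?_, fun x hx => ?_, fun ⟨x, hx, hx'⟩ => ?_⟩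
  · have := h.nondeg (e x) fun y => by
      rw [← e.apply_symm_apply y, hp, hx]
    simpa using this
  · rw [← he] at hx ⊢
    obtain ⟨M, hM⟩ := h.round _ hx
    exact ⟨(e.trans M).trans e.symm, fun w => by simp [← he, hM]⟩
  · obtain ⟨W, hW, hd⟩ := h.lagrangian ⟨e x, by simpa using hx, by rw [he, hx']⟩
    refine ⟨W.map e.symm.toLinearMap, ?_, ?_⟩
    · rintro _ ⟨w, hw, rfl⟩
      rw [← he]
      simpa using hW w hw
    · rw [LinearEquiv.finrank_eq e, ← hd]
      congr 1
      exact (e.symm.submoduleMap W).finrank_eq.symm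

theorem injective_of_similitude {Q : QuadraticForm F V}
    (hQ : ∀ x, (∀ y, QuadraticMap.polar Q x y = 0) → x = 0) {d : F} (hd : d ≠ 0)
    (M : V →ₗ[F] V) (hM : ∀ w, Q (M w) = d * Q w) : Function.Injective M := by
  rw [injective_iff_map_eq_zero]
  intro x hx
  refine hQ x fun y => ?_
  have : d * QuadraticMap.polar Q x y = QuadraticMap.polar Q (M x) (M y) := by
    simp only [QuadraticMap.polar, ← map_add, hM]
    ring
  rw [hx] at this
  simpa [hd, QuadraticMap.polar] using this

/-- The form `Q ⊗ ⟨1, -a⟩`, realised on `V × V` as `(x, y) ↦ Q x - a * Q y`. -/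
def doubleForm (Q : QuadraticForm F V) (a : F) : QuadraticForm F (V × V) :=
  QuadraticMap.prod Q (-a • Q)

theorem doubleForm_apply (Q : QuadraticForm F V) (a : F) (p : V × V) :
    doubleForm Q a p = Q p.1 - a * Q p.2 := by
  simp [doubleForm, sub_eq_add_neg]

theorem doubleForm_nondeg {Q : QuadraticForm F V} (h : IsPfisterLike Q) {a : F} (ha : a ≠ 0)
    (x : V × V) (hx : ∀ y, QuadraticMap.polar (doubleForm Q a) x y = 0) : x = 0 := by
  refine Prod.ext (h.nondeg _ fun y => ?_) (h.nondeg _ fun y => ?_)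
  · have := hx (y, 0)
    simp only [QuadraticMap.polar, doubleForm_apply, Prod.fst_add, Prod.snd_add, add_zero,
      map_zero] at this ⊢
    linear_combination this
  · have := hx (0, y)
    simp only [QuadraticMap.polar, doubleForm_apply, Prod.fst_add, Prod.snd_add, add_zero,
      map_zero] at this ⊢
    refine (mul_eq_zero.1 (?_ : a * _ = 0)).resolve_left ha
    linear_combination -this

/-- Every value of a round form, zero included, is the factor of a similitude that has an
adjoint similitude with the same factor. -/
theorem IsPfisterLike.exists_adjoint_pair {Q : QuadraticForm F V} (h : IsPfisterLike Q) (x : V) :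
    ∃ A A' : V →ₗ[F] V, (∀ w, Q (A w) = Q x * Q w) ∧ (∀ w, Q (A' w) = Q x * Q w) ∧
      ∀ u w, QuadraticMap.polar Q (A u) w = QuadraticMap.polar Q u (A' w) := by
  by_cases hx : Q x = 0
  · exact ⟨0, 0, by simp [hx], by simp [hx], by simp⟩
  · obtain ⟨S, hS⟩ := h.round x hx
    have hS' : ∀ w, Q (S.symm w) = (Q x)⁻¹ * Q w := fun w => by
      have := hS (S.symm w)
      rw [S.apply_symm_apply] at this
      rw [this]
      field_simp
    refine ⟨S, Q x • S.symm.toLinearMap, hS, fun w => ?_, fun u w => ?_⟩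
    · simp only [LinearMap.smul_apply, LinearEquiv.coe_coe, QuadraticMap.map_smul, hS',
        smul_eq_mul]
      field_simp
    · obtain ⟨z, rfl⟩ := S.surjective w
      simp only [LinearMap.smul_apply, LinearEquiv.coe_coe, LinearEquiv.symm_apply_apply,
        QuadraticMap.polar_smul_right, smul_eq_mul]
      simp only [QuadraticMap.polar, ← map_add, hS]
      ring

theorem doubleForm_round [FiniteDimensional F V] {Q : QuadraticForm F V} (h : IsPfisterLike Q)
    {a : F} (ha : a ≠ 0) (x : V × V) (hx : doubleForm Q a x ≠ 0) :
    ∃ M : (V × V) ≃ₗ[F] (V × V), ∀ w, doubleForm Q a (M w) = doubleForm Q a x *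
      doubleForm Q a w := by
  suffices ∃ M : (V × V) →ₗ[F] (V × V), ∀ w, doubleForm Q a (M w) = doubleForm Q a x *
      doubleForm Q a w by
    obtain ⟨M, hM⟩ := this
    exact ⟨LinearEquiv.ofInjectiveEndo M
      (injective_of_similitude (doubleForm_nondeg h ha) hx M hM), hM⟩
  obtain ⟨A, A', hA, hA', hadj⟩ := h.exists_adjoint_pair x.1
  by_cases ht : Q x.2 = 0
  · refine ⟨A.prodMap A, fun w => ?_⟩
    simp only [doubleForm_apply, LinearMap.prodMap_apply, hA, ht]
    ring
  · obtain ⟨T, hT⟩ := h.round x.2 ht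
    -- the matrix `(A, aT; T, t⁻¹ T A' T)` is modelled on Cayley-Dickson multiplication
    refine ⟨(A.coprod (a • T.toLinearMap)).prod
      (T.toLinearMap ∘ₗ LinearMap.id.coprod ((Q x.2)⁻¹ • (A' ∘ₗ T.toLinearMap))), fun w => ?_⟩
    have hadd : ∀ u v, Q (u + v) = Q u + Q v + QuadraticMap.polar Q u v := fun u v => by
      simp [QuadraticMap.polar]
    simp only [doubleForm_apply, LinearMap.prod_apply, Function.prod, LinearMap.coprod_apply,
      LinearMap.comp_apply, LinearMap.smul_apply, LinearEquiv.coe_coe, LinearMap.id_apply, hT,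
      hadd, hA, hA', QuadraticMap.map_smul, QuadraticMap.polar_smul_right, smul_eq_mul, hadj,
      map_smul]
    field_simp
    ring

/-- An isotropic double of a round form is hyperbolic. -/
theorem doubleForm_lagrangian [FiniteDimensional F V] {Q : QuadraticForm F V}
    (h : IsPfisterLike Q) {a : F} (ha : a ≠ 0) (x : V × V) (hx0 : x ≠ 0)
    (hx : doubleForm Q a x = 0) :
    ∃ W : Submodule F (V × V), (∀ w ∈ W, doubleForm Q a w = 0) ∧
      2 * Module.finrank F W = Module.finrank F (V × V) := by
  rw [doubleForm_apply] at hx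
  by_cases ht : Q x.2 = 0
  · -- `Q` is isotropic: take the square of a Lagrangian of `Q`
    have hs : Q x.1 = 0 := by simpa [ht] using hx
    have hiso : ∃ y, y ≠ 0 ∧ Q y = 0 := by
      by_cases h1 : x.1 = 0
      · exact ⟨x.2, fun h2 => hx0 (Prod.ext h1 h2), ht⟩
      · exact ⟨x.1, h1, hs⟩
    obtain ⟨W, hW, hd⟩ := h.lagrangian hiso
    refine ⟨LinearMap.range (W.subtype.prodMap W.subtype), ?_, ?_⟩
    · rintro _ ⟨⟨u, v⟩, rfl⟩
      simp [doubleForm_apply, hW]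
    · rw [LinearMap.finrank_range_of_inj, Module.finrank_prod, Module.finrank_prod, ← hd]
      · ring
      · exact Function.Injective.prodMap W.injective_subtype W.injective_subtype
  · -- `a` is a similarity factor of `Q`: take the graph of a similitude
    have hs : Q x.1 ≠ 0 := by
      intro hs
      rw [hs, zero_sub, neg_eq_zero] at hx
      exact (mul_ne_zero ha ht) hx
    obtain ⟨S, hS⟩ := h.round _ hs
    obtain ⟨T, hT⟩ := h.round _ ht
    refine ⟨LinearMap.range (S.toLinearMap.prod T.toLinearMap), ?_, ?_⟩
    · rintro _ ⟨u, rfl⟩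
      simp only [doubleForm_apply, LinearMap.prod_apply, Function.prod, LinearEquiv.coe_coe, hS, hT]
      linear_combination Q u * hx
    · rw [LinearMap.finrank_range_of_inj, Module.finrank_prod]
      · ring
      · intro u v huv
        exact S.injective (congrArg Prod.fst huv)

theorem IsPfisterLike.double [FiniteDimensional F V] {Q : QuadraticForm F V}
    (h : IsPfisterLike Q) {a : F} (ha : a ≠ 0) : IsPfisterLike (doubleForm Q a) :=
  ⟨doubleForm_nondeg h ha, doubleForm_round h ha,
    fun ⟨x, hx0, hx⟩ => doubleForm_lagrangian h ha x hx0 hx⟩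

end Pfister

/-- Splitting a function on `{0,1}ⁿ⁺¹` according to the first coordinate. -/
def splitFirst (F : Type*) [Field F] (n : ℕ) :
    ((Fin (n + 1) → Bool) → F) ≃ₗ[F] ((Fin n → Bool) → F) × ((Fin n → Bool) → F) where
  toFun f := (fun ε => f (Fin.cons false ε), fun ε => f (Fin.cons true ε))
  invFun p ε := if ε 0 then p.2 (Fin.tail ε) else p.1 (Fin.tail ε)
  map_add' _ _ := rfl
  map_smul' _ _ := rfl
  left_inv f := by
    ext ε
    induction ε using Fin.consCases with
    | cons b ε => cases b <;> simp
  right_inv p := by simp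

theorem doubleForm_splitFirst {F : Type*} [Field F] {n : ℕ} (a : Fin (n + 1) → F)
    (x : (Fin (n + 1) → Bool) → F) :
    doubleForm (pfisterForm (Fin.tail a)) (a 0) (splitFirst F n x) = pfisterForm a x := by
  rw [doubleForm_apply]
  simp only [pfisterForm, QuadraticMap.weightedSumSquares_apply]
  rw [← (Fin.consEquiv fun _ => Bool).sum_comp, Fintype.sum_prod_type, Fintype.sum_bool]
  simp [splitFirst, Fin.consEquiv, Fin.prod_univ_succ, Fin.tail, Finset.mul_sum, mul_assoc]
  ring

theorem isPfisterLike_pfisterForm {F : Type*} [Field F] (h2 : (2 : F) ≠ 0) {n : ℕ}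
    (a : Fin n → F) (ha : ∀ i, a i ≠ 0) : IsPfisterLike (pfisterForm a) := by
  induction n with
  | zero =>
    have hQ : ∀ x, pfisterForm a x = x default * x default := fun x => by
      simp only [pfisterForm, QuadraticMap.weightedSumSquares_apply, Fintype.sum_unique,
        Finset.univ_eq_empty, Finset.prod_empty, one_smul]
      rw [Subsingleton.elim (@default (Fin 0 → Bool) Unique.instInhabited) default]
    refine ⟨fun x hx => ?_, fun x hx => ?_, fun ⟨x, hx0, hx⟩ => ?_⟩
    · have := hx 1
      simp only [QuadraticMap.polar, hQ, Pi.add_apply, Pi.one_apply] at this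
      have h3 : 2 * x default = 0 := by linear_combination this
      ext i
      rw [Subsingleton.elim i default]
      simpa [h2] using h3
    · have hx' : x default ≠ 0 := fun h0 => hx (by rw [hQ, h0, mul_zero])
      refine ⟨LinearEquiv.smulOfNeZero F _ (x default) hx', fun w => ?_⟩
      simp only [hQ, LinearEquiv.smulOfNeZero_apply, Pi.smul_apply, smul_eq_mul]
      ring
    · exfalso
      apply hx0
      ext i
      rw [Subsingleton.elim i default]
      simpa [hQ] using hx
  | succ n ih =>
    exact ((ih (Fin.tail a) fun i => ha _).double (ha 0)).of_isometry (splitFirst F n)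
      (doubleForm_splitFirst a)

/-! ### Linear changes of coordinates and base change -/

section LinearChange

variable {K ι κ μ : Type*} [Field K] [Fintype κ] [DecidableEq κ]

/-- The substitution homomorphism of polynomial rings given by a linear map of the underlying
affine spaces, `f ↦ f ∘ T`. -/
def linSubst (T : (κ → K) →ₗ[K] (ι → K)) : MvPolynomial ι K →ₐ[K] MvPolynomial κ K :=
  MvPolynomial.aeval fun i => ∑ k, MvPolynomial.C (T (Pi.single k 1) i) * MvPolynomial.X k

theorem linSubst_X (T : (κ → K) →ₗ[K] (ι → K)) (i : ι) :
    linSubst T (MvPolynomial.X i) =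
      ∑ k, MvPolynomial.C (T (Pi.single k 1) i) * MvPolynomial.X k := by
  simp [linSubst]

theorem linSubst_C (T : (κ → K) →ₗ[K] (ι → K)) (c : K) :
    linSubst T (MvPolynomial.C c) = MvPolynomial.C c := by
  simp [linSubst]

theorem apply_eq_sum_single (T : (κ → K) →ₗ[K] (ι → K)) (v : κ → K) (i : ι) :
    T v i = ∑ k, v k * T (Pi.single k 1) i := by
  conv_lhs => rw [pi_eq_sum_univ' v]
  simp [map_sum]

theorem linSubst_comp [Fintype μ] [DecidableEq μ] (T : (κ → K) →ₗ[K] (ι → K))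
    (S : (μ → K) →ₗ[K] (κ → K)) :
    (linSubst S).comp (linSubst T) = linSubst (T ∘ₗ S) := by
  ext i : 1
  simp only [AlgHom.comp_apply, linSubst_X, map_sum, map_mul, linSubst_C, Finset.mul_sum,
    LinearMap.comp_apply]
  rw [Finset.sum_comm]
  refine Finset.sum_congr rfl fun l _ => ?_
  rw [apply_eq_sum_single T (S _), map_sum, Finset.sum_mul]
  refine Finset.sum_congr rfl fun k _ => ?_
  rw [map_mul]
  ring

theorem linSubst_id : linSubst (LinearMap.id : (κ → K) →ₗ[K] (κ → K)) = AlgHom.id K _ := by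
  ext i : 1
  simp [linSubst_X, Pi.single_apply]

variable [Fintype ι] [DecidableEq ι]

/-- The change of variables `f ↦ f ∘ T` for an invertible linear map `T`. -/
def linSubstEquiv (T : (κ → K) ≃ₗ[K] (ι → K)) : MvPolynomial ι K ≃ₐ[K] MvPolynomial κ K :=
  AlgEquiv.ofAlgHom (linSubst T.toLinearMap) (linSubst T.symm.toLinearMap)
    (by rw [linSubst_comp]; simp [linSubst_id])
    (by rw [linSubst_comp]; simp [linSubst_id])

theorem formPoly_eq_sum_polar (h2 : (2 : K) ≠ 0) (q : QuadraticForm K (ι → K)) :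
    formPoly q = MvPolynomial.C (2 : K)⁻¹ * ∑ i, ∑ j,
      MvPolynomial.C (QuadraticMap.polar q (Pi.single i 1) (Pi.single j 1)) *
          MvPolynomial.X i * MvPolynomial.X j := by
  have hd : ∀ i, MvPolynomial.C (q (Pi.single i 1)) * MvPolynomial.X i ^ 2 =
      MvPolynomial.C (2 : K)⁻¹ * ∑ j, if i = j then
        MvPolynomial.C (QuadraticMap.polar q (Pi.single i 1) (Pi.single j 1)) *
          MvPolynomial.X i * MvPolynomial.X j else 0 := by
    intro i
    rw [Finset.sum_ite_eq, if_pos (Finset.mem_univ i), QuadraticMap.polar_self, ← mul_assoc,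
      ← mul_assoc, ← map_mul, nsmul_eq_mul, Nat.cast_ofNat, inv_mul_cancel_left₀ h2, sq, mul_assoc]
  rw [formPoly, Finset.sum_congr rfl fun i _ => hd i, ← Finset.mul_sum, ← mul_add,
    ← Finset.sum_add_distrib]
  congr 1
  refine Finset.sum_congr rfl fun i _ => ?_
  rw [← Finset.sum_add_distrib]
  refine Finset.sum_congr rfl fun j _ => ?_
  split_ifs <;> simp

theorem polar_eq_sum (q : QuadraticForm K (ι → K)) (x y : ι → K) :
    QuadraticMap.polar q x y =
      ∑ i, ∑ j, x i * y j * QuadraticMap.polar q (Pi.single i 1) (Pi.single j 1) := by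
  have := LinearMap.sum_repr_mul_repr_mul (B := QuadraticMap.polarBilin q) (Pi.basisFun K ι)
    (Pi.basisFun K ι) x y
  rw [QuadraticMap.polarBilin_apply_apply] at this
  rw [← this, Finsupp.sum_fintype _ _ (by simp)]
  refine Finset.sum_congr rfl fun i _ => ?_
  rw [Finsupp.sum_fintype _ _ (by simp)]
  simp [mul_assoc]

theorem linSubst_formPoly (h2 : (2 : K) ≠ 0) (q : QuadraticForm K (ι → K))
    (T : (κ → K) →ₗ[K] (ι → K)) (c : K) (w : κ → K)
    (h : ∀ v, q (T v) = c * ∑ i, w i * v i ^ 2) :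
    linSubst T (formPoly q) = MvPolynomial.C c * diagPoly w := by
  have hpol : ∀ k l, QuadraticMap.polar q (T (Pi.single k 1)) (T (Pi.single l 1)) =
      if k = l then 2 * (c * w k) else 0 := by
    intro k l
    simp only [QuadraticMap.polar, ← map_add, h, Pi.add_apply]
    have h1 : ∀ i, w i * ((Pi.single k 1 : κ → K) i + (Pi.single l 1 : κ → K) i) ^ 2 =
        w i * (Pi.single k 1 : κ → K) i ^ 2 + w i * (Pi.single l 1 : κ → K) i ^ 2 +
        if k = i then (if k = l then 2 * w k else 0) else 0 := by
      intro i
      by_cases hk : k = i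
      · subst hk
        by_cases hl : k = l
        · subst hl; simp; ring
        · simp [hl]
      · simp [hk, Pi.single_apply, Ne.symm hk]
    simp only [h1, Finset.sum_add_distrib, Finset.sum_ite_eq, Finset.mem_univ, if_true]
    split_ifs <;> ring
  rw [formPoly_eq_sum_polar h2, map_mul, linSubst_C]
  have hexp : linSubst T (∑ i, ∑ j,
      MvPolynomial.C (QuadraticMap.polar q (Pi.single i 1) (Pi.single j 1)) *
          MvPolynomial.X i * MvPolynomial.X j) =
      ∑ k, ∑ l, MvPolynomial.C
        (QuadraticMap.polar q (T (Pi.single k 1)) (T (Pi.single l 1))) *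
          MvPolynomial.X k * MvPolynomial.X l := by
    have swap : ∀ g : ι → ι → κ → κ → MvPolynomial κ K,
        ∑ i, ∑ j, ∑ k, ∑ l, g i j k l = ∑ k, ∑ l, ∑ i, ∑ j, g i j k l := by
      intro g
      rw [Finset.sum_congr rfl fun i _ => Finset.sum_comm, Finset.sum_comm]
      refine Finset.sum_congr rfl fun k _ => ?_
      rw [Finset.sum_congr rfl fun i _ => Finset.sum_comm, Finset.sum_comm]
    calc _ = ∑ i, ∑ j, ∑ k, ∑ l,
            MvPolynomial.C (QuadraticMap.polar q (Pi.single i 1) (Pi.single j 1)) *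
              ((MvPolynomial.C (T (Pi.single k 1) i) * MvPolynomial.X k) *
                (MvPolynomial.C (T (Pi.single l 1) j) * MvPolynomial.X l)) := by
          simp only [map_sum, map_mul, linSubst_C, linSubst_X, mul_assoc]
          refine Finset.sum_congr rfl fun i _ => Finset.sum_congr rfl fun j _ => ?_
          rw [Finset.sum_mul_sum]
          simp only [Finset.mul_sum, mul_assoc]
      _ = _ := by
          rw [swap]
          refine Finset.sum_congr rfl fun k _ => Finset.sum_congr rfl fun l _ => ?_
          rw [polar_eq_sum q (T _) (T _)]
          simp only [map_sum, map_mul, Finset.sum_mul]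
          refine Finset.sum_congr rfl fun i _ => Finset.sum_congr rfl fun j _ => ?_
          ring
  rw [hexp]
  simp only [hpol, diagPoly, Finset.mul_sum]
  refine Finset.sum_congr rfl fun k _ => ?_
  rw [Finset.sum_eq_single k]
  · rw [if_pos rfl]
    have : MvPolynomial.C (σ := κ) (2 : K)⁻¹ * MvPolynomial.C 2 = 1 := by
      rw [← map_mul, inv_mul_cancel₀ h2, map_one]
    simp only [map_mul]
    linear_combination (MvPolynomial.C c * MvPolynomial.C (w k) * MvPolynomial.X k ^ 2) * this
  · intro l _ hl
    simp [hl.symm]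
  · simp

/-- A linear change of coordinates which diagonalises `q` up to a scalar identifies the cone over
the quadric of `q` with a diagonal cone. -/
theorem quadricConeRing_equiv_diagCone (h2 : (2 : K) ≠ 0) (q : QuadraticForm K (ι → K))
    (T : (κ → K) ≃ₗ[K] (ι → K)) {c : K} (hc : c ≠ 0) (w : κ → K)
    (h : ∀ v, q (T v) = c * ∑ i, w i * v i ^ 2) :
    Nonempty (quadricConeRing q ≃ₐ[K] DiagCone w) := by
  refine ⟨Ideal.quotientEquivAlg _ _ (linSubstEquiv T) ?_⟩
  rw [Ideal.map_span, Set.image_singleton]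
  have : (linSubstEquiv T : MvPolynomial ι K →+* MvPolynomial κ K) (formPoly q) =
      MvPolynomial.C c * diagPoly w := linSubst_formPoly h2 q T.toLinearMap c w h
  rw [this, Ideal.span_singleton_mul_left_unit]
  exact (IsUnit.mk0 c hc).map MvPolynomial.C

end LinearChange

/-- An injective similitude onto a subform, given over `K`, extends to every field extension; it
stays injective because the source form is nondegenerate. The extension is by the same matrix,
and the similitude property is the matrix identity `Nᵀ diag(p) N = c diag(w)`. -/
theorem exists_baseChange {K F ι κ : Type*} [Field K] [Field F] [Algebra K F] [Fintype ι]
    [Fintype κ] [DecidableEq ι] [DecidableEq κ] (h2 : (2 : K) ≠ 0)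
    (p : ι → K) (w : κ → K) (hw : ∀ i, w i ≠ 0) {c : K} (hc : c ≠ 0)
    (J : (κ → K) →ₗ[K] (ι → K))
    (hJ : ∀ v, ∑ i, p i * J v i ^ 2 = c * ∑ k, w k * v k ^ 2) :
    ∃ J' : (κ → F) →ₗ[F] (ι → F), Function.Injective J' ∧
      ∀ v, ∑ i, algebraMap K F (p i) * J' v i ^ 2 =
        algebraMap K F c * ∑ k, algebraMap K F (w k) * v k ^ 2 := by
  let f := algebraMap K F
  let N : Matrix ι κ K := LinearMap.toMatrix' J
  have hbil : ∀ u v, ∑ i, p i * J u i * J v i = c * ∑ k, w k * u k * v k := by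
    intro u v
    have h := hJ (u + v)
    have e1 : ∑ i, p i * J (u + v) i ^ 2 =
        ∑ i, p i * J u i ^ 2 + ∑ i, p i * J v i ^ 2 + 2 * ∑ i, p i * J u i * J v i := by
      rw [Finset.mul_sum, ← Finset.sum_add_distrib, ← Finset.sum_add_distrib]
      exact Finset.sum_congr rfl fun i _ => by rw [map_add, Pi.add_apply]; ring
    have e2 : ∑ k, w k * (u + v) k ^ 2 =
        ∑ k, w k * u k ^ 2 + ∑ k, w k * v k ^ 2 + 2 * ∑ k, w k * u k * v k := by
      rw [Finset.mul_sum, ← Finset.sum_add_distrib, ← Finset.sum_add_distrib]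
      exact Finset.sum_congr rfl fun i _ => by rw [Pi.add_apply]; ring
    rw [e1, e2, hJ, hJ] at h
    refine mul_left_cancel₀ h2 ?_
    linear_combination h
  have hgram : N.transpose * Matrix.diagonal p * N = c • Matrix.diagonal w := by
    ext k l
    have h := hbil (Pi.single k 1) (Pi.single l 1)
    rw [Matrix.mul_apply]
    simp only [Matrix.mul_diagonal, Matrix.transpose_apply, N, LinearMap.toMatrix'_apply,
      Matrix.smul_apply, Matrix.diagonal_apply, smul_eq_mul]
    calc _ = ∑ i, p i * J (Pi.single k 1) i * J (Pi.single l 1) i :=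
          Finset.sum_congr rfl fun i _ => by ring
      _ = _ := by
          rw [h]
          congr 1
          rw [Finset.sum_eq_single k]
          · by_cases hkl : k = l <;> simp [hkl]
          · intro b _ hb
            simp [hb]
          · simp
  have hgram' : (N.map f).transpose * Matrix.diagonal (f ∘ p) * N.map f =
      f c • Matrix.diagonal (f ∘ w) := by
    have := congrArg (fun M : Matrix κ κ K => M.map f) hgram
    simp only [Matrix.map_mul, Matrix.transpose_map] at this
    rw [Matrix.diagonal_map (map_zero f)] at this
    rw [← Function.comp_def f p] at this
    rw [this]
    ext k l
    simp only [Matrix.map_apply, Matrix.smul_apply, Matrix.diagonal_apply, smul_eq_mul,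
      Function.comp_apply]
    split_ifs <;> simp
  let J' : (κ → F) →ₗ[F] (ι → F) := (N.map f).mulVecLin
  have hbil' : ∀ u v, ∑ i, f (p i) * J' u i * J' v i = f c * ∑ k, f (w k) * u k * v k := by
    intro u v
    have := congrArg (fun M : Matrix κ κ F => dotProduct u (M.mulVec v)) hgram'
    simp only [← Matrix.mulVec_mulVec, Matrix.dotProduct_mulVec u (N.map f).transpose,
      Matrix.vecMul_transpose, Matrix.smul_mulVec, dotProduct_smul, smul_eq_mul] at this
    simp only [dotProduct, Matrix.mulVec_diagonal, Function.comp] at this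
    calc _ = _ := Finset.sum_congr rfl fun i _ => by simp only [J', Matrix.mulVecLin_apply]; ring
      _ = _ := this
      _ = _ := by
        congr 1
        exact Finset.sum_congr rfl fun i _ => by ring
  refine ⟨J', ?_, fun v => ?_⟩
  · rw [injective_iff_map_eq_zero]
    intro v hv
    ext k
    have := hbil' v (Pi.single k 1)
    simp only [hv, Pi.zero_apply, mul_zero, zero_mul, Finset.sum_const_zero] at this
    rw [Finset.sum_eq_single k (by intro b _ hb; simp [hb]) (by simp)] at this
    simpa [f, hc, hw] using this.symm
  · have := hbil' v v
    simpa only [mul_assoc, ← sq] using this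

/-! ### Pfister neighbours -/

theorem stablyBirationalForms_of_diagCone {K ι₁ ι₂ κ₁ κ₂ : Type*} [Field K]
    [Fintype ι₁] [DecidableEq ι₁] [Fintype ι₂] [DecidableEq ι₂] [Fintype κ₁] [Fintype κ₂]
    {q₁ : QuadraticForm K (ι₁ → K)} {q₂ : QuadraticForm K (ι₂ → K)} {w₁ : κ₁ → K} {w₂ : κ₂ → K}
    (e₁ : quadricConeRing q₁ ≃ₐ[K] DiagCone w₁) (e₂ : quadricConeRing q₂ ≃ₐ[K] DiagCone w₂)
    (h : ∃ a b : ℕ, Nonempty (FractionRing (MvPolynomial (Fin a) (DiagCone w₁)) ≃ₐ[K]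
      FractionRing (MvPolynomial (Fin b) (DiagCone w₂)))) :
    StablyBirationalForms q₁ q₂ := by
  obtain ⟨a, b, ⟨e⟩⟩ := h
  exact ⟨a, b, ⟨((fractionRingCongr (MvPolynomial.mapAlgEquiv (Fin a) e₁)).trans e).trans
    (fractionRingCongr (MvPolynomial.mapAlgEquiv (Fin b) e₂)).symm⟩⟩

theorem exists_diagonalization {K : Type*} [Field K] (h2 : (2 : K) ≠ 0) {m : ℕ}
    (q : QuadraticForm K (Fin m → K)) (hq : (QuadraticMap.polarBilin q).Nondegenerate) :
    ∃ (w : Fin m → K) (T : (Fin m → K) ≃ₗ[K] (Fin m → K)), (∀ i, w i ≠ 0) ∧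
      ∀ v, q (T v) = ∑ i, w i * v i ^ 2 := by
  let _ : Invertible (2 : K) := invertibleOfNonzero h2
  have hsep : (QuadraticMap.associated (R := K) q).SeparatingLeft := by
    intro x hx
    refine hq.1 x fun y => ?_
    have h3 := QuadraticMap.two_nsmul_associated K q
    rw [← h3]
    simp only [LinearMap.smul_apply, hx y, smul_zero]
  obtain ⟨w, ⟨e⟩⟩ := QuadraticForm.equivalent_weightedSumSquares_units_of_nondegenerate' q hsep
  have hm : Module.finrank K (Fin m → K) = m := by simp
  generalize Module.finrank K (Fin m → K) = m' at w e hm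
  subst hm
  refine ⟨fun i => (w i : K), e.symm.toLinearEquiv, fun i => (w i).ne_zero, fun v => ?_⟩
  have h := e.symm.map_app v
  rw [QuadraticMap.weightedSumSquares_apply] at h
  refine h.trans (Finset.sum_congr rfl fun i _ => ?_)
  rw [Units.smul_def, smul_eq_mul, sq]

theorem pfisterForm_apply {K : Type*} [Field K] {n : ℕ} (a : Fin n → K)
    (x : (Fin n → Bool) → K) :
    pfisterForm a x = ∑ ε, (∏ i, if ε i then -a i else 1) * x ε ^ 2 := by
  simp only [pfisterForm, QuadraticMap.weightedSumSquares_apply, smul_eq_mul, sq]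

/-- A subform of dimension greater than half of an isotropic Pfister form is isotropic, because
it meets a totally isotropic subspace of half the dimension. -/
theorem isotropic_of_pfister_isotropic {F κ : Type*} [Field F] [Fintype κ] (h2 : (2 : F) ≠ 0)
    {n : ℕ} (a : Fin n → F) (ha : ∀ i, a i ≠ 0) (hiso : ∃ x, x ≠ 0 ∧ pfisterForm a x = 0)
    (J : (κ → F) →ₗ[F] ((Fin n → Bool) → F)) (hJ : Function.Injective J)
    (hdim : 2 ^ n < 2 * Fintype.card κ) : ∃ v, v ≠ 0 ∧ pfisterForm a (J v) = 0 := by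
  obtain ⟨W, hW, hWdim⟩ := (isPfisterLike_pfisterForm h2 a ha).lagrangian hiso
  have hsum := Submodule.finrank_sup_add_finrank_inf_eq W (LinearMap.range J)
  have hle := Submodule.finrank_le (W ⊔ LinearMap.range J)
  have hr : Module.finrank F (LinearMap.range J) = Fintype.card κ := by
    rw [LinearMap.finrank_range_of_inj hJ, Module.finrank_pi]
  have ht : Module.finrank F ((Fin n → Bool) → F) = 2 ^ n := by simp
  have hne : W ⊓ LinearMap.range J ≠ ⊥ := by
    intro h
    rw [h, finrank_bot] at hsum
    omega
  obtain ⟨y, ⟨hyW, v, rfl⟩, hy0⟩ := Submodule.exists_mem_ne_zero_of_ne_bot hne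
  exact ⟨v, fun h => hy0 (by rw [h, map_zero]), hW _ hyW⟩

/-- **Lemma 3.3 (Schreieder; cf. Hoffmann).**  Let `K` be a field of characteristic `≠ 2`,
let `q₂` be an `n`-fold Pfister form over `K` and let `q₁` be a Pfister neighbour of `q₂`
(i.e. `q₁` is non-degenerate, similar to a subform of `q₂`, and `2 dim q₁ > dim q₂ = 2ⁿ`).
Then `q₁` is stably birational to `q₂`. -/
theorem pfister_neighbour_stably_birational_to_pfister_form
    (K : Type*) [Field K] (h2 : (2 : K) ≠ 0)
    (n : ℕ) (a : Fin n → K) (ha : ∀ i, a i ≠ 0)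
    (q₂ : QuadraticForm K ((Fin n → Bool) → K))
    (hq₂ : QuadraticMap.Equivalent q₂ (pfisterForm a))
    (m₁ : ℕ) (q₁ : QuadraticForm K (Fin m₁ → K))
    (hq₁nondeg : (QuadraticMap.polarBilin q₁).Nondegenerate)
    (c : K) (hc : c ≠ 0)
    (j : (Fin m₁ → K) →ₗ[K] ((Fin n → Bool) → K))
    (hj : Function.Injective j)
    (hsub : ∀ v, q₂ (j v) = c * q₁ v)
    (hdim : 2 ^ n < 2 * m₁) :
    StablyBirationalForms q₁ q₂ := by
  obtain ⟨w, T, hw, hT⟩ := exists_diagonalization h2 q₁ hq₁nondeg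
  obtain ⟨e₁⟩ := quadricConeRing_equiv_diagCone h2 q₁ T one_ne_zero w
    (fun v => by rw [hT, one_mul])
  have hle : m₁ ≤ 2 ^ n := by
    simpa using LinearMap.finrank_le_finrank_of_injective hj
  by_cases hn : n ≤ 1
  · -- In dimension at most two the neighbour fills the whole Pfister form.
    have hm : m₁ = 2 ^ n := by
      interval_cases n <;> omega
    have hfin : Module.finrank K (Fin m₁ → K) = Module.finrank K ((Fin n → Bool) → K) := by
      simp [hm]
    obtain ⟨e₂⟩ := quadricConeRing_equiv_diagCone h2 q₂
      (T.trans (LinearEquiv.ofInjectiveOfFinrankEq j hj hfin)) hc w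
      (fun v => by
        rw [← hT, ← hsub]
        rfl)
    exact stablyBirationalForms_of_diagCone e₁ e₂ ⟨0, 0, ⟨AlgEquiv.refl⟩⟩
  obtain ⟨φ⟩ := hq₂
  have hn4 : 4 ≤ 2 ^ n := by
    calc 4 = 2 ^ 2 := rfl
      _ ≤ 2 ^ n := Nat.pow_le_pow_right (by norm_num) (by omega)
  set p : (Fin n → Bool) → K := fun ε => ∏ i, if ε i then -a i else 1
  have hp : ∀ ε, p ε ≠ 0 := fun ε => Finset.prod_ne_zero_iff.2 fun i _ => by
    split_ifs
    · exact neg_ne_zero.2 (ha i)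
    · exact one_ne_zero
  obtain ⟨e₂⟩ := quadricConeRing_equiv_diagCone h2 q₂ φ.symm.toLinearEquiv one_ne_zero p
    (fun v => by
      rw [one_mul, ← pfisterForm_apply]
      exact φ.symm.map_app v)
  let J : (Fin m₁ → K) →ₗ[K] ((Fin n → Bool) → K) :=
    φ.toLinearEquiv.toLinearMap ∘ₗ j ∘ₗ T.toLinearMap
  have hJ : ∀ v, ∑ i, p i * J v i ^ 2 = c * ∑ k, w k * v k ^ 2 := fun v => by
    rw [← pfisterForm_apply, ← hT, ← hsub]
    exact φ.map_app _
  have h₁ : 3 ≤ Fintype.card (Fin m₁) := by rw [Fintype.card_fin]; omega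
  have h₂ : 3 ≤ Fintype.card (Fin n → Bool) := by simp; omega
  have := isDomain_diagCone h2 h₁ w hw
  have := isDomain_diagCone h2 h₂ p hp
  refine stablyBirationalForms_of_diagCone e₁ e₂
    (diagCone_stably_birational h2 h₁ h₂ w p hw hp ?_ ?_)
  · -- Over the function field of `q₁` the neighbour has its generic point, which lies in `q₂`.
    obtain ⟨v, hv0, hv⟩ := generic_point h2 h₁ w hw
    obtain ⟨J', hJ'inj, hJ'⟩ :=
      exists_baseChange (F := FractionRing (DiagCone w)) h2 p w hw hc J hJ
    refine ⟨J' v, fun h => hv0 (hJ'inj (by rw [h, map_zero])), ?_⟩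
    rw [hJ', hv, mul_zero]
  · -- Over the function field of `q₂` the Pfister form is isotropic, hence hyperbolic, and the
    -- neighbour is too large to avoid a Lagrangian.
    obtain ⟨v, hv0, hv⟩ := generic_point h2 h₂ p hp
    obtain ⟨J', hJ'inj, hJ'⟩ :=
      exists_baseChange (F := FractionRing (DiagCone p)) h2 p w hw hc J hJ
    have hpf : ∀ x : (Fin n → Bool) → FractionRing (DiagCone p),
        pfisterForm (fun i => algebraMap K (FractionRing (DiagCone p)) (a i)) x =
          ∑ ε, algebraMap K (FractionRing (DiagCone p)) (p ε) * x ε ^ 2 := fun x => by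
      rw [pfisterForm_apply]
      refine Finset.sum_congr rfl fun ε _ => ?_
      congr 1
      refine Eq.trans ?_ (map_prod (algebraMap K (FractionRing (DiagCone p)))
        (fun i => if ε i then -a i else 1) Finset.univ).symm
      exact Finset.prod_congr rfl fun i _ => by split_ifs <;> simp
    have h2' : (2 : FractionRing (DiagCone p)) ≠ 0 := by
      rw [← map_ofNat (algebraMap K (FractionRing (DiagCone p))) 2]
      exact (map_ne_zero _).2 h2
    obtain ⟨u, hu0, hu⟩ := isotropic_of_pfister_isotropic h2'
      (fun i => algebraMap K (FractionRing (DiagCone p)) (a i))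
      (fun i => (map_ne_zero _).2 (ha i)) ⟨v, hv0, by rw [hpf, hv]⟩ J' hJ'inj
      (by rw [Fintype.card_fin]; exact hdim)
    rw [hpf, hJ'] at hu
    exact ⟨u, hu0, (mul_eq_zero.1 hu).resolve_left ((map_ne_zero _).2 hc)⟩
end
end

section
/- Let n and r be positive integers with r ≥ n, and let (d_i)_{0≤i≤r+1} be a tuple of non-negative integers all of the same parity. Then there exists a smooth r-fold quadric bundle of type (d_i)_{0≤i≤r+1} over ℙ^n that is rational. -/
/-!
The bundle is given by `q = 2 z_0 L + Q` with
`L = ∑_{k ≤ n} x_k ^ e_k z_{k+1}` and `Q = ∑_j f_j z_{j+1}²`, `f_j = ∑_k c_{jk} x_k ^ d_{j+1}`,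
where `r ≥ n` leaves room for all the terms of `L`, and `c_{jk}` are complex numbers that are
algebraically independent over `ℚ`. This `X` contains the section `z_1 = … = z_{r+1} = 0`.

*Rationality.* The equation has degree one in `z_0`, so on the chart `x_0 = z_1 = 1` it is solved
by `z_0 = -Q / (2 L)`, and the other coordinates are free
(`QB.nonempty_fractionRing_chartRing_equiv`). Irreducibility of `q` reduces to that of `L` and to
`L ∤ Q` (`QB.irreducible_aeval_qpoly`).

*Smoothness.* Genericity of the `c_{jk}` is exploited through derivations of `ℂ`: there is a
derivation `D` with `D c_{jk} = 1` that kills the other coefficients (`exists_complex_dual_derivations`).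
At a singular point `p` of `X`, applying `D` to `q(p) = 0` gives
`0 = dq_p (D p) + x_k ^ d_{j+1} z_{j+1}² = x_k ^ d_{j+1} z_{j+1}²`. Choosing `k` with `x_k ≠ 0`
shows `z_{j+1} = 0` for all `j` (`QB.inr_succ_eq_zero`). So `p` lies on the section, where
`∂q/∂z_{k+1} = 2 z_0 x_k ^ e_k ≠ 0`, a contradiction. The same argument applied to a kernel vector
of the matrix at `x = (1, …, 1)` shows that `q` is generically non-degenerate, and `q` is nonzero
on every fibre because the `x_k ^ e_k` have no common zero on `ℙⁿ`.
-/

noncomputable section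
open MvPolynomial

/-- The rational function field `ℂ(t₁, …, t_d)`. -/
abbrev RatFF (d : ℕ) : Type := FractionRing (MvPolynomial (Fin d) ℂ)

/-- An affine ℂ-algebra `R` (a chart, or an affine cone, of a variety `V`) has stably
rational fraction field: `Frac(R)(y₁,…,y_m) ≅ ℂ(t₁,…,t_d)` for some `m`, `d`.
If `R` is the coordinate ring of the affine cone over a projective variety `V`
(so that `Frac R = ℂ(V)(t)` is stably birational to `ℂ(V)`), this holds if and only if
`V` is stably rational, i.e. `V × ℙᵐ` is birational to a projective space for some `m`. -/
def IsStablyRationalSpec (R : Type*) [CommRing R] [Algebra ℂ R] : Prop :=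
  ∃ m d : ℕ, Nonempty (FractionRing (MvPolynomial (Fin m) R) ≃ₐ[ℂ] RatFF d)

/-- The fraction field of the affine ℂ-algebra `R` embeds into a purely transcendental
extension of `ℂ`.  If `R` is the coordinate ring of the affine cone over a projective
variety `V`, this holds if and only if `V` is unirational. -/
def IsUnirationalSpec (R : Type*) [CommRing R] [Algebra ℂ R] : Prop :=
  ∃ d : ℕ, Nonempty (FractionRing R →ₐ[ℂ] RatFF d)

/-- `Z` is an algebraic (Zariski closed) subset of a parameter space `V` with coordinates
`coords`: it is the common zero locus of a set of polynomial functions in the coordinates. -/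
def IsAlgSubsetOn {V : Type*} (coords : Set (V → ℂ)) (Z : Set V) : Prop :=
  ∃ S : Set (V → ℂ),
    S ⊆ ↑(Algebra.adjoin ℂ coords) ∧ Z = {v | ∀ f ∈ S, f v = 0}

/-- `P` holds for a very general point of the parameter space `V`: it holds away from a
countable union of proper algebraic subsets. -/
def VeryGenerallyOn {V : Type*} (coords : Set (V → ℂ)) (P : V → Prop) : Prop :=
  ∃ Z : ℕ → Set V,
    (∀ m, IsAlgSubsetOn coords (Z m) ∧ Z m ≠ Set.univ) ∧ ∀ v, (∀ m, v ∉ Z m) → P v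

namespace QB

/-- Homogeneous coordinate ring `ℂ[x₀, …, xₙ]` of `ℙⁿ`. -/
abbrev PolyP (n : ℕ) := MvPolynomial (Fin (n+1)) ℂ

/-- Coordinate ring `ℂ[x₀,…,xₙ,z₀,…,z_{r+1}]` of the affine double cone over
`ℙ(𝓔)` (`x`'s: base variables, `z`'s: fibre variables). -/
abbrev Amb (n r : ℕ) := MvPolynomial (Fin (n+1) ⊕ Fin (r+2)) ℂ

/-- Homogeneous component of (possibly negative) degree `m`; it is `0` for `m < 0`. -/
def homComp (n : ℕ) (m : ℤ) : Submodule ℂ (PolyP n) :=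
  if 0 ≤ m then homogeneousSubmodule (Fin (n+1)) ℂ m.toNat else ⊥

/-- The parameter space of symmetric matrices `A = (a_{ij})`, `0 ≤ i,j ≤ r+1`, of homogeneous
polynomials with `deg a_{ij} = l_i + l_j + l₀`, i.e. of line bundle valued quadratic forms
`q : 𝓔 → O_{ℙⁿ}(l₀)` on `𝓔 = ⊕_{i=0}^{r+1} O_{ℙⁿ}(-l_i)`.  The corresponding
quadric bundle `X = {q = 0} ⊂ ℙ(𝓔)`, given locally over `ℙⁿ` by
`∑ a_{ij} z_i z_j = 0`, is an `r`-fold quadric bundle over `ℙⁿ` of type `(d_i)` with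
`d_i = 2 l_i + l₀`. -/
def SymMat (n r : ℕ) (l : Fin (r+2) → ℤ) (l₀ : ℤ) : Type :=
  {a : Fin (r+2) → Fin (r+2) → PolyP n //
    (∀ i j, a i j = a j i) ∧ ∀ i j, a i j ∈ homComp n (l i + l j + l₀)}

variable {n r : ℕ} {l : Fin (r+2) → ℤ} {l₀ : ℤ}

/-- The quadratic form `q = ∑_{i,j} a_{ij} z_i z_j` as a polynomial on the double affine cone. -/
def qpoly (A : SymMat n r l l₀) : Amb n r :=
  ∑ i, ∑ j, (rename Sum.inl (A.1 i j)) * X (Sum.inr i) * X (Sum.inr j)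

/-- `A` defines a quadric bundle over `ℙⁿ`, i.e. `X = {q = 0} → ℙⁿ` is flat (the quadratic
form is nonzero on each fibre) with generic fibre a smooth quadric (the symmetric matrix is
generically non-degenerate). -/
def IsQuadricBundle (A : SymMat n r l l₀) : Prop :=
  (Matrix.det (Matrix.of fun i j => A.1 i j) ≠ 0) ∧
    ∀ x : Fin (n+1) → ℂ, x ≠ 0 → ∃ i j, eval x (A.1 i j) ≠ 0

/-- Substitution `x_i = 1`, `z_j = 1`, giving the equation of `X` on the standard affine
chart `{x_i ≠ 0, z_j ≠ 0}` of `ℙ(𝓔)`. -/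
def chartSub (i : Fin (n+1)) (j : Fin (r+2)) (p : Amb n r) : Amb n r :=
  aeval (fun v => if v = Sum.inl i ∨ v = Sum.inr j then 1 else X v) p

/-- The total space `X = {q = 0} ⊂ ℙ(𝓔)` is smooth over `ℂ`: on each standard affine chart
the dehomogenized equation satisfies the Jacobian criterion. -/
def SmoothTotalSpace (A : SymMat n r l l₀) : Prop :=
  ∀ (i : Fin (n+1)) (j : Fin (r+2)) (p : Fin (n+1) ⊕ Fin (r+2) → ℂ),
    eval p (chartSub i j (qpoly A)) = 0 →
      ∃ v, eval p (pderiv v (chartSub i j (qpoly A))) ≠ 0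

/-- Coordinate ring of the affine double cone over `X = {q = 0} ⊂ ℙ(𝓔)`; the corresponding
affine variety is stably birational to `X` (its fraction field is `ℂ(X)(t, s)`). -/
def ConeRing (A : SymMat n r l l₀) : Type :=
  Amb n r ⧸ Ideal.span {qpoly A}

instance (A : SymMat n r l l₀) : CommRing (ConeRing A) := Ideal.Quotient.commRing _
instance (A : SymMat n r l l₀) : Algebra ℂ (ConeRing A) := Ideal.Quotient.algebra ℂ

/-- Coordinate ring of the affine chart `X ∩ {x_i = 1, z_j = 1}` of `X ⊂ ℙ(𝓔)`;
when nonempty, this chart is a dense open subvariety of `X`, so if it is integral its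
fraction field is the function field `ℂ(X)`. -/
def ChartRing (A : SymMat n r l l₀) (i : Fin (n+1)) (j : Fin (r+2)) : Type :=
  Amb n r ⧸ Ideal.span {qpoly A, X (Sum.inl i) - 1, X (Sum.inr j) - 1}

instance (A : SymMat n r l l₀) (i : Fin (n+1)) (j : Fin (r+2)) : CommRing (ChartRing A i j) :=
  Ideal.Quotient.commRing _
instance (A : SymMat n r l l₀) (i : Fin (n+1)) (j : Fin (r+2)) : Algebra ℂ (ChartRing A i j) :=
  Ideal.Quotient.algebra ℂ

/-- The quadric bundle `X` given by `A` is rational over `ℂ`: `X` is integral and its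
function field (computed on a dense standard affine chart) is purely transcendental,
`ℂ(X) ≅ ℂ(t₁, …, t_{n+r})`, i.e. `X` is birational to `ℙ^{n+r}`. -/
def IsRationalQB (A : SymMat n r l l₀) : Prop :=
  IsDomain (ConeRing A) ∧
    ∃ i j, Nonempty (FractionRing (ChartRing A i j) ≃ₐ[ℂ] RatFF (n+r))

/-- The quadric bundle `X` given by `A` is stably rational: `X × ℙᵐ` is birational to a
projective space for some `m`; equivalently its affine double cone is. -/
def IsStablyRationalQB (A : SymMat n r l l₀) : Prop :=
  IsStablyRationalSpec (ConeRing A)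

/-- The quadric bundle `X` given by `A` is unirational: `ℂ(X)` embeds into a purely
transcendental extension of `ℂ`; equivalently this holds for its affine double cone. -/
def IsUnirationalQB (A : SymMat n r l l₀) : Prop :=
  IsUnirationalSpec (ConeRing A)

/-- The coordinates (coefficients of the matrix entries) on the parameter space `SymMat`. -/
def symMatCoords (n r : ℕ) (l : Fin (r+2) → ℤ) (l₀ : ℤ) :
    Set (SymMat n r l l₀ → ℂ) :=
  {f | ∃ (i j : Fin (r+2)) (m : Fin (n+1) →₀ ℕ), f = fun A => coeff m (A.1 i j)}

/-- The euclidean (analytic) topology on the parameter space, induced from the coefficients. -/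
def coeffTopology (n r : ℕ) (l : Fin (r+2) → ℤ) (l₀ : ℤ) :
    TopologicalSpace (SymMat n r l l₀) :=
  TopologicalSpace.induced
    (fun A (p : Fin (r+2) × Fin (r+2) × ((Fin (n+1)) →₀ ℕ)) => coeff p.2.2 (A.1 p.1 p.2.1))
    inferInstance

/-- Dehomogenization `ℂ[x₀,…,xₙ] → ℂ(t₁,…,tₙ) = ℂ(ℙⁿ)`, `x₀ ↦ 1`, `x_i ↦ t_i`. -/
def dehom (n : ℕ) : PolyP n →ₐ[ℂ] RatFF n :=
  aeval fun i : Fin (n+1) =>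
    if h : i = 0 then 1 else algebraMap (MvPolynomial (Fin n) ℂ) (RatFF n) (X (i.pred h))

/-- The quadric bundle given by `A` admits a rational section, i.e. its generic fibre,
the quadric `{∑ a_{ij}(x) z_i z_j = 0} ⊂ ℙ^{r+1}_{ℂ(ℙⁿ)}`, has a rational point. -/
def HasRationalSection (A : SymMat n r l l₀) : Prop :=
  ∃ w : Fin (r+2) → RatFF n, w ≠ 0 ∧ ∑ i, ∑ j, dehom n (A.1 i j) * w i * w j = 0

end QB


/-! ### Derivations of `ℂ` dual to algebraically independent numbers -/

open scoped IntermediateField.algebraAdjoinAdjoin in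
/-- In characteristic zero, a derivation can be prescribed arbitrarily on a transcendence basis:
`L` is formally étale over the polynomial ring on the basis, so derivations extend. -/
lemma exists_derivation_of_isTranscendenceBasis {K L ι : Type*} [Field K] [Field L]
    [CharZero K] [Algebra K L] {v : ι → L} (hv : IsTranscendenceBasis K v) (w : ι → L) :
    ∃ D : Derivation K L L, ∀ i, D (v i) = w i := by
  classical
  let algPL : Algebra (MvPolynomial ι K) L := (aeval (R := K) v).toRingHom.toAlgebra
  have hmap : ∀ p : MvPolynomial ι K, algebraMap (MvPolynomial ι K) L p = aeval v p := fun _ => rfl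
  have : IsScalarTower K (MvPolynomial ι K) L := IsScalarTower.of_algebraMap_eq fun x => by
    rw [hmap, algebraMap_eq, aeval_C]
  let algPS : Algebra (MvPolynomial ι K) (Algebra.adjoin K (Set.range v)) :=
    hv.1.aevalEquiv.toRingEquiv.toRingHom.toAlgebra
  have : IsScalarTower (MvPolynomial ι K) (Algebra.adjoin K (Set.range v)) L :=
    IsScalarTower.of_algebraMap_eq fun x => by
      rw [hmap]; exact (hv.1.algebraMap_aevalEquiv x).symm
  have e1 : Algebra.FormallyEtale (MvPolynomial ι K) (Algebra.adjoin K (Set.range v)) :=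
    .of_equiv (AlgEquiv.ofRingEquiv (f := hv.1.aevalEquiv.toRingEquiv) fun _ => rfl)
  have e2 : Algebra.FormallyEtale (Algebra.adjoin K (Set.range v))
      (IntermediateField.adjoin K (Set.range v)) := .of_isLocalization (nonZeroDivisors _)
  have : Algebra.IsAlgebraic (IntermediateField.adjoin K (Set.range v)) L :=
    hv.isAlgebraic_field
  have e3 : Algebra.FormallyEtale (IntermediateField.adjoin K (Set.range v)) L :=
    .of_isSeparable _ L
  have e4 : Algebra.FormallyEtale (Algebra.adjoin K (Set.range v)) L :=
    .comp _ (IntermediateField.adjoin K (Set.range v)) _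
  have e5 : Algebra.FormallyEtale (MvPolynomial ι K) L :=
    .comp _ (Algebra.adjoin K (Set.range v)) _
  have hb := KaehlerDifferential.isBaseChange_of_formallyEtale K (MvPolynomial ι K) L
  let d : Derivation K (MvPolynomial ι K) L := mkDerivation K w
  refine ⟨(hb.lift d.liftKaehlerDifferential).compDer (KaehlerDifferential.D K L), fun i => ?_⟩
  have : v i = algebraMap (MvPolynomial ι K) L (X i) := by rw [hmap, aeval_X]
  rw [this]
  change hb.lift _ (KaehlerDifferential.D K L _) = _
  rw [← KaehlerDifferential.map_D K K, hb.lift_eq,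
    Derivation.liftKaehlerDifferential_comp_D, mkDerivation_X]

/-- There are complex numbers `c` admitting a dual family of derivations of `ℂ`; they are taken
from a transcendence basis over `ℚ`, which is infinite since `ℂ` is uncountable. -/
lemma exists_complex_dual_derivations (ι : Type) [Finite ι] [DecidableEq ι] :
    ∃ c : ι → ℂ, ∀ a, ∃ D : Derivation ℚ ℂ ℂ, ∀ b, D (c b) = if b = a then 1 else 0 := by
  obtain ⟨s, hs⟩ := exists_isTranscendenceBasis ℚ ℂ
  have : Infinite s := by
    by_contra h
    rw [not_infinite_iff_finite] at h
    have h1 := IsAlgClosed.cardinal_le_max_transcendence_basis' _ hs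
    have h2 : Cardinal.mk ℂ ≤ Cardinal.aleph0 := by
      refine h1.trans ?_
      simp
    rw [Cardinal.mk_complex] at h2
    exact absurd h2 (not_le.2 Cardinal.aleph0_lt_continuum)
  obtain ⟨m, ⟨e⟩⟩ := Finite.exists_equiv_fin ι
  let f : ι ↪ s := (e.toEmbedding.trans Fin.valEmbedding).trans (Infinite.natEmbedding s)
  refine ⟨fun i => f i, fun a => ?_⟩
  classical
  obtain ⟨D, hD⟩ := exists_derivation_of_isTranscendenceBasis hs (Pi.single (f a) 1)
  refine ⟨D, fun b => ?_⟩
  rw [hD, Pi.single_apply]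
  simp

/-! ### The quadratic form, non-degeneracy and smoothness -/

namespace QB

section Construction

variable {n r : ℕ}

/-- The coefficient of `z_{j+1}` in `L`: the monomial `x_j ^ e_j` for `j ≤ n`, and `0` for
`j > n`. -/
def gPoly (n : ℕ) {r : ℕ} (e : Fin (r+1) → ℕ) (j : Fin (r+1)) : PolyP n :=
  if h : (j : ℕ) < n + 1 then X ⟨j, h⟩ ^ e j else 0

/-- The coefficient `f_j = ∑_k c_{jk} x_k ^ m_j` of `z_{j+1}²` in `Q`, a Fermat form with
coefficients `c`. -/
def fPoly (m : Fin (r+1) → ℕ) (c : Fin (r+1) × Fin (n+1) → ℂ) (j : Fin (r+1)) : PolyP n :=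
  ∑ k, C (c (j, k)) * X k ^ m j

/-- The symmetric matrix of `q = 2 z_0 L + Q`: the first row and column are `(0, g_0, …, g_r)`,
and the complementary block is diagonal with entries `f_0, …, f_r`. -/
def bMat (e m : Fin (r+1) → ℕ) (c : Fin (r+1) × Fin (n+1) → ℂ) :
    Fin (r+2) → Fin (r+2) → PolyP n :=
  Fin.cases (Fin.cases 0 (gPoly n e))
    (fun i => Fin.cases (gPoly n e i) (fun j => if i = j then fPoly m c i else 0))

section
variable (e m : Fin (r+1) → ℕ) (c : Fin (r+1) × Fin (n+1) → ℂ)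

@[simp] lemma bMat_zero_zero : bMat e m c 0 0 = 0 := rfl
@[simp] lemma bMat_zero_succ (j) : bMat e m c 0 (Fin.succ j) = gPoly n e j := rfl
@[simp] lemma bMat_succ_zero (j) : bMat e m c (Fin.succ j) 0 = gPoly n e j := rfl
@[simp] lemma bMat_succ_succ (i j) :
    bMat e m c (Fin.succ i) (Fin.succ j) = if i = j then fPoly m c i else 0 := rfl

lemma bMat_symm (i j) : bMat e m c i j = bMat e m c j i := by
  refine Fin.cases ?_ (fun i => ?_) i <;> refine Fin.cases ?_ (fun j => ?_) j <;> simp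
  by_cases h : i = j
  · simp [h]
  · simp [h, Ne.symm h]

lemma mem_homComp {k : ℤ} {N : ℕ} (h : k = N) {p : PolyP n} (hp : p.IsHomogeneous N) :
    p ∈ homComp n k := by
  subst h
  simpa [homComp] using hp

lemma gPoly_isHomogeneous (j) : (gPoly n e j).IsHomogeneous (e j) := by
  unfold gPoly
  split_ifs
  · exact isHomogeneous_X_pow _ _
  · exact isHomogeneous_zero _ _ _

lemma fPoly_isHomogeneous (j) : (fPoly m c j).IsHomogeneous (m j) :=
  IsHomogeneous.sum _ _ _ fun _ _ => isHomogeneous_C_mul_X_pow _ _ _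

/-- The form `L = ∑_j g_j z_{j+1}`, linear in the fibre coordinates. -/
def lPoly : Amb n r := ∑ j, rename Sum.inl (gPoly n e j) * X (Sum.inr (Fin.succ j))

/-- The diagonal quadratic form `Q = ∑_j f_j z_{j+1}²`. -/
def rPoly : Amb n r := ∑ j, rename Sum.inl (fPoly m c j) * X (Sum.inr (Fin.succ j)) ^ 2

variable {e m c} {l : Fin (r+2) → ℤ} {l₀ : ℤ} {A : SymMat n r l l₀}

lemma qpoly_eq (hA : A.1 = bMat e m c) :
    qpoly A = (2 * lPoly e) * X (Sum.inr 0) + rPoly m c := by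
  unfold qpoly lPoly rPoly
  rw [hA, Fin.sum_univ_succ]
  simp only [Fin.sum_univ_succ (n := r+1), bMat_zero_zero, bMat_zero_succ, bMat_succ_zero,
    bMat_succ_succ, Finset.sum_add_distrib, apply_ite (rename Sum.inl), map_zero, ite_mul,
    zero_mul, Finset.sum_ite_eq, Finset.mem_univ, if_true, Finset.mul_sum, Finset.sum_mul, zero_add]
  rw [← add_assoc, ← Finset.sum_add_distrib]
  refine congrArg₂ (· + ·) (Finset.sum_congr rfl fun _ _ => ?_)
    (Finset.sum_congr rfl fun _ _ => ?_) <;> ring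

lemma eval_qpoly (A : SymMat n r l l₀) (p : Fin (n+1) ⊕ Fin (r+2) → ℂ) :
    eval p (qpoly A) =
      ∑ i, p (Sum.inr i) * ∑ j, eval (fun k => p (Sum.inl k)) (A.1 i j) * p (Sum.inr j) := by
  simp only [qpoly, map_sum, map_mul, eval_X, eval_rename, Finset.mul_sum]
  refine Finset.sum_congr rfl fun i _ => Finset.sum_congr rfl fun j _ => ?_
  simp only [Function.comp_def]
  ring

lemma pderiv_inr_rename (i : Fin (r+2)) (F : PolyP n) :
    pderiv (Sum.inr i) (rename Sum.inl F : Amb n r) = 0 := by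
  classical
  apply pderiv_eq_zero_of_notMem_vars
  intro h
  have := vars_rename Sum.inl F h
  simp at this

lemma eval_pderiv_inr_qpoly (A : SymMat n r l l₀) (p : Fin (n+1) ⊕ Fin (r+2) → ℂ)
    (i : Fin (r+2)) :
    eval p (pderiv (Sum.inr i) (qpoly A)) =
      2 * ∑ j, eval (fun k => p (Sum.inl k)) (A.1 i j) * p (Sum.inr j) := by
  simp only [qpoly, map_sum, Derivation.leibniz, pderiv_inr_rename, pderiv_X, Pi.single_apply,
    Sum.inr.injEq, smul_eq_mul, mul_zero, add_zero, map_add, map_mul, eval_X, eval_rename,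
    Function.comp_def, apply_ite (eval p), map_zero, mul_ite, mul_one,
    Finset.sum_add_distrib]
  rw [two_mul]
  congr 1
  · refine Finset.sum_congr rfl fun a _ => ?_
    simp [A.2.1 a i]
  · rw [Finset.sum_comm]
    simp [mul_comm]

/-- The chain rule for a derivation `D` of `ℂ` applied to `q(p)`: differentiating the point
gives `dq_p (D p)`, and differentiating the coefficients gives the second sum, since among the
coefficients of `q` only the `c_{jk}` are not integers. -/
lemma derivation_eval_qpoly (hA : A.1 = bMat e m c) (D : Derivation ℚ ℂ ℂ)
    (p : Fin (n+1) ⊕ Fin (r+2) → ℂ) :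
    D (eval p (qpoly A)) = ∑ v, eval p (pderiv v (qpoly A)) * D (p v) +
      ∑ j, ∑ k, D (c (j, k)) * p (Sum.inl k) ^ m j * p (Sum.inr (Fin.succ j)) ^ 2 := by
  classical
  -- `E F = D (F(p)) - dF_p (D p)`: `D` applied to the coefficients of `F`, evaluated at `p`.
  let E : Amb n r →+ ℂ :=
    { toFun := fun F => D (eval p F) - ∑ v, eval p (pderiv v F) * D (p v)
      map_zero' := by simp
      map_add' := fun F G => by
        simp only [map_add, add_mul, Finset.sum_add_distrib]; ring }
  have E_def : ∀ F, E F = D (eval p F) - ∑ v, eval p (pderiv v F) * D (p v) := fun _ => rfl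
  have E_mul : ∀ F G, E (F * G) = E F * eval p G + eval p F * E G := fun F G => by
    simp only [E_def, map_mul, Derivation.leibniz, smul_eq_mul, map_add, add_mul,
      Finset.sum_add_distrib, sub_mul, mul_sub, Finset.sum_mul, Finset.mul_sum]
    have h1 : ∀ v, eval p F * eval p (pderiv v G) * D (p v)
      = eval p F * (eval p (pderiv v G) * D (p v)) := fun v => by ring
    have h2 : ∀ v, eval p G * eval p (pderiv v F) * D (p v)
      = eval p (pderiv v F) * D (p v) * eval p G := fun v => by ring
    simp only [h1, h2]
    ring
  have E_X : ∀ v, E (X v) = 0 := fun v => by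
    simp [E_def, pderiv_X, Pi.single_apply, apply_ite (eval p)]
  have E_C : ∀ a, E (C a) = D a := fun a => by simp [E_def]
  have E_pow : ∀ F, E F = 0 → ∀ N : ℕ, E (F ^ N) = 0 := fun F hF N => by
    induction N with
    | zero =>
      have := E_C 1
      simpa using this
    | succ N ih => rw [pow_succ, E_mul, hF, ih]; simp
  have E_g : ∀ j, E (rename Sum.inl (gPoly n e j)) = 0 := fun j => by
    unfold gPoly
    split_ifs
    · rw [map_pow, rename_X]; exact E_pow _ (E_X _) _
    · simp
  have E_L : E (lPoly e) = 0 := by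
    simp [lPoly, E_mul, E_g, E_X]
  have E_two : E (2 : Amb n r) = 0 := by
    have := E_C 2
    have h : D (2 : ℂ) = 0 := by
      have := D.map_natCast 2
      simpa using this
    rw [← h, ← this, map_ofNat C 2]
  have key : E (qpoly A) =
      ∑ j, ∑ k, D (c (j, k)) * p (Sum.inl k) ^ m j * p (Sum.inr (Fin.succ j)) ^ 2 := by
    rw [qpoly_eq hA, map_add, E_mul, E_mul, E_L, E_two, E_X]
    simp [rPoly, fPoly, E_mul, E_C, E_pow _ (E_X _), Finset.sum_mul]
  rw [← key, E_def]
  ring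

/-- The Bertini-type step. If `q` vanishes at `p` and `dq_p (D p) = 0` termwise for every
derivation `D` of `ℂ`, then applying the derivation dual to `c_{jk}` to `q(p) = 0` leaves
`x_k ^ m_j z_{j+1}² = 0`. The second hypothesis holds at singular points of a chart because
the coordinates set to `1` are killed by every `D`. -/
lemma inr_succ_eq_zero (hA : A.1 = bMat e m c)
    (hc : ∀ a, ∃ D : Derivation ℚ ℂ ℂ, ∀ b, D (c b) = if b = a then 1 else 0)
    (p : Fin (n+1) ⊕ Fin (r+2) → ℂ) (h0 : eval p (qpoly A) = 0)
    (h1 : ∀ (D : Derivation ℚ ℂ ℂ) v, eval p (pderiv v (qpoly A)) * D (p v) = 0)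
    {k : Fin (n+1)} (hk : p (Sum.inl k) ≠ 0) (j : Fin (r+1)) : p (Sum.inr (Fin.succ j)) = 0 := by
  obtain ⟨D, hD⟩ := hc (j, k)
  have h := derivation_eval_qpoly hA D p
  rw [h0, map_zero, Finset.sum_eq_zero fun v _ => h1 D v, zero_add,
    Finset.sum_eq_single j, Finset.sum_eq_single k, hD, if_pos rfl, one_mul] at h
  · by_contra hne
    exact mul_ne_zero (pow_ne_zero _ hk) (pow_ne_zero _ hne) h.symm
  · intro k' _ hk'
    rw [hD, if_neg (by simpa using hk'), zero_mul, zero_mul]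
  · simp
  · intro j' _ hj'
    refine Finset.sum_eq_zero fun k' _ => ?_
    rw [hD, if_neg (by simp [hj']), zero_mul, zero_mul]
  · simp

lemma eval_gPoly_castLE (hrn : n ≤ r) (x : Fin (n+1) → ℂ) (k : Fin (n+1)) :
    eval x (gPoly n e (Fin.castLE (by omega) k)) = x k ^ e (Fin.castLE (by omega) k) := by
  simp [gPoly, Nat.le_of_lt_succ k.2]

lemma isQuadricBundle_of_bMat (hrn : n ≤ r) (hA : A.1 = bMat e m c)
    (hc : ∀ a, ∃ D : Derivation ℚ ℂ ℂ, ∀ b, D (c b) = if b = a then 1 else 0) :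
    IsQuadricBundle A := by
  refine ⟨fun hdet => ?_, fun x hx => ?_⟩
  -- A kernel vector over `x = (1, …, 1)` would be a zero of `q` at which all `∂q/∂z_i` vanish.
  · have hdet' : (Matrix.of fun i j => eval (fun _ => (1 : ℂ)) (A.1 i j)).det = 0 := by
      have := congrArg (eval fun _ => (1 : ℂ)) hdet
      rw [RingHom.map_det, map_zero] at this
      exact this
    obtain ⟨v, hv, hMv⟩ := Matrix.exists_mulVec_eq_zero_iff.2 hdet'
    have hMv' : ∀ i, ∑ j, eval (fun _ => (1 : ℂ)) (A.1 i j) * v j = 0 := fun i => congrFun hMv i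
    have hz := inr_succ_eq_zero hA hc (Sum.elim (fun _ => 1) v)
      (by simp [eval_qpoly, hMv'])
      (by
        rintro D (k | i)
        · simp
        · simp [eval_pderiv_inr_qpoly, hMv'])
      (k := 0) (by simp)
    simp only [Sum.elim_inr] at hz
    have h := hMv' (Fin.succ (Fin.castLE (by omega) (0 : Fin (n+1))))
    rw [Fin.sum_univ_succ, hA, bMat_succ_zero, eval_gPoly_castLE hrn] at h
    simp only [hz] at h
    refine hv (funext fun i => ?_)
    refine Fin.cases ?_ hz i
    simpa using h
  · obtain ⟨k, hk⟩ := Function.ne_iff.1 hx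
    refine ⟨0, Fin.succ (Fin.castLE (by omega) k), ?_⟩
    rw [hA, bMat_zero_succ, eval_gPoly_castLE hrn]
    exact pow_ne_zero _ hk

lemma eval_chartSub (i : Fin (n+1)) (j : Fin (r+2)) (p : Fin (n+1) ⊕ Fin (r+2) → ℂ) (F : Amb n r) :
    eval p (chartSub i j F) =
      eval (fun v => if v = Sum.inl i ∨ v = Sum.inr j then 1 else p v) F := by
  unfold chartSub
  rw [aeval_def, eval_eval₂, eval, eval₂Hom]
  change eval₂ _ _ F = eval₂ _ _ F
  congr 1
  · ext; simp
  · ext v; split_ifs <;> simp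

lemma pderiv_chartSub (i : Fin (n+1)) (j : Fin (r+2)) {v : Fin (n+1) ⊕ Fin (r+2)}
    (hv : ¬ (v = Sum.inl i ∨ v = Sum.inr j)) (F : Amb n r) :
    pderiv v (chartSub i j F) = chartSub i j (pderiv v F) := by
  classical
  unfold chartSub
  induction F using MvPolynomial.induction_on with
  | C a => simp
  | add F G hF hG => simp only [map_add, hF, hG]
  | mul_X F w hF =>
    simp only [map_mul, aeval_X, Derivation.leibniz, smul_eq_mul, map_add, hF]
    congr 2
    split_ifs with h
    · have : w ≠ v := fun h' => hv (h' ▸ h)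
      simp [pderiv_X_of_ne this]
    · by_cases hw : w = v
      · subst hw; simp
      · simp [pderiv_X_of_ne hw]

lemma smoothTotalSpace_of_bMat (hrn : n ≤ r) (hA : A.1 = bMat e m c)
    (hc : ∀ a, ∃ D : Derivation ℚ ℂ ℂ, ∀ b, D (c b) = if b = a then 1 else 0) :
    SmoothTotalSpace A := by
  intro i j p h0
  by_contra! hsing
  rw [eval_chartSub] at h0
  set p' : Fin (n+1) ⊕ Fin (r+2) → ℂ :=
    fun v => if v = Sum.inl i ∨ v = Sum.inr j then 1 else p v with hp'
  have hd : ∀ v, ¬ (v = Sum.inl i ∨ v = Sum.inr j) → eval p' (pderiv v (qpoly A)) = 0 := by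
    intro v hv
    rw [← hsing v, pderiv_chartSub i j hv, eval_chartSub]
  have hpi : p' (Sum.inl i) = 1 := by simp [hp']
  have hpj : p' (Sum.inr j) = 1 := by simp [hp']
  have hz := inr_succ_eq_zero hA hc p' h0
    (by
      intro D v
      by_cases hv : v = Sum.inl i ∨ v = Sum.inr j
      · simp [hp', hv]
      · rw [hd v hv, zero_mul]) (k := i) (by rw [hpi]; exact one_ne_zero)
  obtain rfl : j = 0 := by
    by_contra hj
    obtain ⟨j', rfl⟩ := Fin.exists_succ_eq.2 hj
    rw [hz j'] at hpj
    exact zero_ne_one hpj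
  -- All `z_{j+1}` vanish, so `∂q/∂z_{i+1} = 2 z_0 x_i ^ e_i = 2` at this point.
  have h := hd (Sum.inr (Fin.succ (Fin.castLE (by omega) i))) (by simp [Fin.succ_ne_zero])
  rw [eval_pderiv_inr_qpoly, Fin.sum_univ_succ, hA, bMat_succ_zero, eval_gPoly_castLE hrn] at h
  simp [hz, hpi, hpj] at h

end
end Construction
end QB

/-! ### Irreducibility and rationality -/

namespace QB

section Rationality

variable {n r : ℕ}

lemma mem_supported_compl_singleton {σ : Type*} {w : σ} {F : MvPolynomial σ ℂ} :
    F ∈ supported ℂ ({w}ᶜ : Set σ) ↔ w ∉ F.vars := by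
  rw [mem_supported, Set.subset_compl_singleton_iff, Finset.mem_coe]

/-- A polynomial not involving `w` that is divisible by a polynomial of degree one in `w`
vanishes. -/
lemma eq_zero_of_dvd {σ : Type*} {w : σ} {f g G : MvPolynomial σ ℂ} (hf0 : f ≠ 0)
    (hg : g ∈ supported ℂ ({w}ᶜ : Set σ))
    (hG : G ∈ supported ℂ ({w}ᶜ : Set σ)) (h : f * X w + g ∣ G) : G = 0 := by
  classical
  obtain ⟨H, rfl⟩ := h
  by_contra hne
  have h1 : f * X w + g ≠ 0 := left_ne_zero_of_mul hne
  have h2 : H ≠ 0 := right_ne_zero_of_mul hne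
  have hdeg : ∀ {F : MvPolynomial σ ℂ}, F ∈ supported ℂ ({w}ᶜ : Set σ) ↔ degreeOf w F = 0 := by
    intro F
    rw [mem_supported_compl_singleton, mem_vars_iff_degreeOf_ne_zero, not_not]
  rw [hdeg, degreeOf_mul_eq h1 h2] at hG
  have h3 : f * X w + g ∈ supported ℂ ({w}ᶜ : Set σ) := hdeg.2 (by omega)
  have h4 := sub_mem h3 hg
  rw [add_sub_cancel_right, hdeg, degreeOf_mul_eq hf0 (X_ne_zero w), degreeOf_X] at h4
  simp at h4

/-- A substitution on the double cone that sets some of the coordinates `x_0`, `z_1` to `1` and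
fixes all other coordinates. It covers at once the identity (the cone) and the
dehomogenization on the chart `{x_0 = 1, z_1 = 1}`. -/
def IsPartialChart (s : Fin (n+1) ⊕ Fin (r+2) → Amb n r) : Prop :=
  ∀ v, s v = X v ∨ (s v = 1 ∧ (v = Sum.inl 0 ∨ v = Sum.inr (Fin.succ 0)))

section

variable {s : Fin (n+1) ⊕ Fin (r+2) → Amb n r}

lemma IsPartialChart.eval_aeval (hs : IsPartialChart s) {p : Fin (n+1) ⊕ Fin (r+2) → ℂ}
    (hx : p (Sum.inl 0) = 1) (hz : p (Sum.inr (Fin.succ 0)) = 1) (F : Amb n r) :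
    eval p (aeval s F) = eval p F := by
  induction F using MvPolynomial.induction_on with
  | C a => simp
  | add F G hF hG => simp only [map_add, hF, hG]
  | mul_X F w hF =>
    rw [map_mul, map_mul, map_mul, hF, aeval_X]
    rcases hs w with h | ⟨h, rfl | rfl⟩
    · rw [h]
    · rw [h, map_one, eval_X, hx]
    · rw [h, map_one, eval_X, hz]

lemma IsPartialChart.aeval_mem_supported (hs : IsPartialChart s) {w : Fin (n+1) ⊕ Fin (r+2)}
    {F : Amb n r} (hF : F ∈ supported ℂ ({w}ᶜ : Set (Fin (n+1) ⊕ Fin (r+2)))) :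
    aeval s F ∈ supported ℂ ({w}ᶜ : Set (Fin (n+1) ⊕ Fin (r+2))) := by
  have hle : supported ℂ ({w}ᶜ : Set (Fin (n+1) ⊕ Fin (r+2))) ≤
      (supported ℂ ({w}ᶜ : Set (Fin (n+1) ⊕ Fin (r+2)))).comap (aeval s) := by
    refine Algebra.adjoin_le ?_
    rintro _ ⟨v, hv, rfl⟩
    simp only [Subalgebra.coe_comap, Set.mem_preimage, aeval_X, SetLike.mem_coe]
    rcases hs v with h | ⟨h, -⟩ <;> rw [h]
    · exact X_mem_supported.2 hv
    · exact one_mem _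
  exact hle hF

lemma rename_inl_mem_supported (i : Fin (r+2)) (F : PolyP n) :
    (rename Sum.inl F : Amb n r) ∈ supported ℂ ({Sum.inr i}ᶜ : Set (Fin (n+1) ⊕ Fin (r+2))) := by
  classical
  rw [mem_supported_compl_singleton]
  intro h
  have := vars_rename Sum.inl F h
  simp at this

variable (e m : Fin (r+1) → ℕ) (c : Fin (r+1) × Fin (n+1) → ℂ)

lemma lPoly_mem_supported :
    (lPoly e : Amb n r) ∈ supported ℂ ({Sum.inr 0}ᶜ : Set (Fin (n+1) ⊕ Fin (r+2))) :=
  sum_mem fun _ _ => mul_mem (rename_inl_mem_supported _ _)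
    (X_mem_supported.2 (by simp [Fin.succ_ne_zero]))

lemma rPoly_mem_supported :
    (rPoly m c : Amb n r) ∈ supported ℂ ({Sum.inr 0}ᶜ : Set (Fin (n+1) ⊕ Fin (r+2))) :=
  sum_mem fun _ _ => mul_mem (rename_inl_mem_supported _ _)
    (pow_mem (X_mem_supported.2 (by simp [Fin.succ_ne_zero])) _)

/-- After any partial dehomogenization `L` is irreducible: it is linear in `z_2` with leading
coefficient a power of `x_1`, and `x_1` does not divide the remaining part since that part is
nonzero at `x = (1, 0, …, 0)`, `z = (0, 1, 0, …, 0)`. -/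
lemma irreducible_aeval_lPoly (hn : 0 < n) (hrn : n ≤ r) (hs : IsPartialChart s) :
    Irreducible (aeval s (lPoly e : Amb n r)) := by
  classical
  let j₁ : Fin (r+1) := ⟨1, by omega⟩
  let k₁ : Fin (n+1) := ⟨1, by omega⟩
  have hj₁ : j₁ ≠ 0 := by simp [j₁, Fin.ext_iff]
  have hk₁ : k₁ ≠ 0 := by simp [k₁, Fin.ext_iff]
  have hsx : s (Sum.inl k₁) = X (Sum.inl k₁) := by
    rcases hs (Sum.inl k₁) with h | ⟨-, h⟩
    · exact h
    · simp [hk₁] at h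
  have hsz : s (Sum.inr j₁.succ) = X (Sum.inr j₁.succ) := by
    rcases hs (Sum.inr j₁.succ) with h | ⟨-, h⟩
    · exact h
    · rcases h with h | h
      · cases h
      · exact absurd (Fin.succ_injective _ (Sum.inr_injective h)) hj₁
  have hg : gPoly n e j₁ = X k₁ ^ e j₁ := by
    rw [gPoly, dif_pos (show (j₁ : ℕ) < n + 1 by simp only [j₁]; omega)]
  let M : Amb n r := ∑ j ∈ Finset.univ.erase j₁,
    rename Sum.inl (gPoly n e j) * X (Sum.inr (Fin.succ j))
  have hL : aeval s (lPoly e : Amb n r) =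
      X (Sum.inl k₁) ^ e j₁ * X (Sum.inr j₁.succ) + aeval s M := by
    rw [lPoly, ← Finset.add_sum_erase _ _ (Finset.mem_univ j₁), map_add, map_mul, aeval_X, hsz,
      hg, map_pow, map_pow, rename_X, aeval_X, hsx]
  have hM : aeval s M ∈ supported ℂ ({Sum.inr j₁.succ}ᶜ : Set (Fin (n+1) ⊕ Fin (r+2))) :=
    hs.aeval_mem_supported <| sum_mem fun j hj => mul_mem (rename_inl_mem_supported _ _)
      (X_mem_supported.2 (by simpa using Finset.ne_of_mem_erase hj))
  rw [hL]
  refine irreducible_mul_X_add _ _ _ (pow_ne_zero _ (X_ne_zero _)) ?_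
    (mem_supported_compl_singleton.1 hM) (IsRelPrime.pow_left ?_)
  · rw [← mem_supported_compl_singleton]
    exact pow_mem (X_mem_supported.2 (by simp)) _
  · rw [X_prime.irreducible.isRelPrime_iff_not_dvd]
    rintro ⟨H, hH⟩
    -- the point `x = (1, 0, …, 0)`, `z = (0, 1, 0, …, 0)`
    let p : Fin (n+1) ⊕ Fin (r+2) → ℂ :=
      Sum.elim (fun k => if k = 0 then 1 else 0) (fun j => if j = Fin.succ 0 then 1 else 0)
    have h := congrArg (eval p) hH
    rw [hs.eval_aeval (by simp [p]) (by simp [p]), map_mul, eval_X] at h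
    have hp : p (Sum.inl k₁) = 0 := by simp [p, hk₁]
    rw [hp, zero_mul, map_sum, Finset.sum_eq_single 0] at h
    · simp [p, gPoly] at h
    · intro j _ hj
      have hp' : p (Sum.inr j.succ) = 0 :=
        if_neg fun h' => hj (Fin.succ_injective _ h')
      rw [map_mul, eval_X, hp', mul_zero]
    · intro h0
      exact absurd (Finset.mem_erase.2 ⟨hj₁.symm, Finset.mem_univ _⟩) h0

variable {e m c} {l : Fin (r+2) → ℤ} {l₀ : ℤ} {A : SymMat n r l l₀}

/-- After any partial dehomogenization `q = 2 L z_0 + Q` is irreducible: it is linear in `z_0`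
with irreducible leading coefficient `2 L`, and `L` does not divide `Q`, because at a suitable
zero of `L` the value of `Q` is a sum of distinct coefficients `c`, which a dual derivation
shows to be nonzero. -/
lemma irreducible_aeval_qpoly (hn : 0 < n) (hrn : n ≤ r) (hA : A.1 = bMat e m c)
    (hc : ∀ a, ∃ D : Derivation ℚ ℂ ℂ, ∀ b, D (c b) = if b = a then 1 else 0)
    (hs : IsPartialChart s) : Irreducible (aeval s (qpoly A)) := by
  classical
  have hsz : s (Sum.inr 0) = X (Sum.inr 0) := by
    rcases hs (Sum.inr 0) with h | ⟨-, h⟩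
    · exact h
    · simp at h
  have hL := irreducible_aeval_lPoly e hn hrn hs
  have hunit : IsUnit (2 : Amb n r) := by
    rw [← map_ofNat C 2]
    exact (isUnit_iff_ne_zero.2 (two_ne_zero (α := ℂ))).map C
  have h2L : Irreducible (2 * aeval s (lPoly e : Amb n r)) :=
    (irreducible_isUnit_mul hunit).2 hL
  have hmem : 2 * aeval s (lPoly e : Amb n r) ∈
      supported ℂ ({Sum.inr 0}ᶜ : Set (Fin (n+1) ⊕ Fin (r+2))) :=
    mul_mem (ofNat_mem _ 2) (hs.aeval_mem_supported (lPoly_mem_supported e))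
  rw [qpoly_eq hA, map_add, map_mul, map_mul, aeval_X, hsz, map_ofNat]
  refine irreducible_mul_X_add _ _ _ h2L.ne_zero (mem_supported_compl_singleton.1 hmem)
    (mem_supported_compl_singleton.1 (hs.aeval_mem_supported (rPoly_mem_supported m c))) ?_
  rw [h2L.isRelPrime_iff_not_dvd]
  rintro ⟨H, hH⟩
  let j₁ : Fin (r+1) := ⟨1, by omega⟩
  have hj₁ : j₁ ≠ 0 := by simp [j₁, Fin.ext_iff]
  -- the point `x = (1, …, 1)`, `z = (0, 1, -1, 0, …, 0)`, at which `L` vanishes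
  let ζ : Fin (r+1) → ℂ := fun j => if j = 0 then 1 else if j = j₁ then -1 else 0
  let p : Fin (n+1) ⊕ Fin (r+2) → ℂ := Sum.elim (fun _ => 1) (Fin.cons 0 ζ)
  have hsum : ∀ a : Fin (r+1) → ℂ, ∀ N : ℕ, 0 < N →
      ∑ j, a j * ζ j ^ N = a 0 + a j₁ * (-1) ^ N := by
    intro a N hN
    rw [← Finset.add_sum_erase _ _ (Finset.mem_univ 0),
      ← Finset.add_sum_erase _ _ (Finset.mem_erase.2 ⟨hj₁, Finset.mem_univ _⟩),
      Finset.sum_eq_zero]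
    · simp [ζ, hj₁]
    · intro j hj
      have h1 := Finset.ne_of_mem_erase hj
      have h0 := Finset.ne_of_mem_erase (Finset.mem_of_mem_erase hj)
      simp [ζ, h0, h1, hN.ne']
  have hLp : eval p (lPoly e) = 0 := by
    have h := hsum (fun j => eval (fun _ => 1) (gPoly n e j)) 1 one_pos
    simp only [pow_one] at h
    have e0 : eval (fun _ => (1 : ℂ)) (gPoly n e (0 : Fin (r+1))) = 1 := by simp [gPoly]
    have e1 : eval (fun _ => (1 : ℂ)) (gPoly n e j₁) = 1 := by
      rw [gPoly, dif_pos (show (j₁ : ℕ) < n + 1 by simp only [j₁]; omega)]; simp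
    rw [e0, e1] at h
    simp only [lPoly, map_sum, map_mul, eval_rename, eval_X, p, Sum.elim_inr, Fin.cons_succ]
    simpa [Function.comp_def] using h
  have hRp : eval p (rPoly m c) = ∑ k, c (0, k) + ∑ k, c (j₁, k) := by
    have h := hsum (fun j => eval (fun _ => 1) (fPoly m c j)) 2 two_pos
    simp only [rPoly, map_sum, map_mul, map_pow, eval_rename, eval_X, p, Sum.elim_inr,
      Fin.cons_succ]
    simpa [Function.comp_def, fPoly] using h
  have h := congrArg (eval p) hH
  rw [map_mul, map_mul, hs.eval_aeval rfl (by simp [p, ζ]), hs.eval_aeval rfl (by simp [p, ζ]),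
    hLp, mul_zero, zero_mul, hRp] at h
  obtain ⟨D, hD⟩ := hc (0, 0)
  have h' := congrArg D h
  simp [hD, hj₁] at h'

lemma isDomain_coneRing (hn : 0 < n) (hrn : n ≤ r) (hA : A.1 = bMat e m c)
    (hc : ∀ a, ∃ D : Derivation ℚ ℂ ℂ, ∀ b, D (c b) = if b = a then 1 else 0) :
    IsDomain (ConeRing A) := by
  have h := irreducible_aeval_qpoly (s := X) hn hrn hA hc fun _ => Or.inl rfl
  rw [aeval_X_left, AlgHom.id_apply] at h
  have : (Ideal.span {qpoly A}).IsPrime := (Ideal.span_singleton_prime h.ne_zero).2 h.prime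
  exact Ideal.Quotient.isDomain _

/-- The ideal of the affine chart `X ∩ {x_0 = 1, z_1 = 1}`, whose quotient is
`ChartRing A 0 1`. -/
abbrev chartIdeal (A : SymMat n r l l₀) : Ideal (Amb n r) :=
  Ideal.span {qpoly A, X (Sum.inl 0) - 1, X (Sum.inr (Fin.succ 0)) - 1}

/-- The substitution `x_0 = 1`, `z_1 = 1`. -/
def chartVar (n r : ℕ) (v : Fin (n+1) ⊕ Fin (r+2)) : Amb n r :=
  if v = Sum.inl 0 ∨ v = Sum.inr (Fin.succ 0) then 1 else X v

lemma isPartialChart_chartVar : IsPartialChart (chartVar n r) := by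
  intro v
  unfold chartVar
  split_ifs with h
  · exact Or.inr ⟨rfl, h⟩
  · exact Or.inl rfl

lemma mk_aeval_chartVar (A : SymMat n r l l₀) (F : Amb n r) :
    Ideal.Quotient.mk (chartIdeal A) (aeval (chartVar n r) F) =
      Ideal.Quotient.mk (chartIdeal A) F := by
  suffices h : (Ideal.Quotient.mkₐ ℂ (chartIdeal A)).comp (aeval (chartVar n r)) =
      Ideal.Quotient.mkₐ ℂ (chartIdeal A) from DFunLike.congr_fun h F
  refine algHom_ext fun v => ?_
  rw [AlgHom.comp_apply, aeval_X, chartVar]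
  split_ifs with h
  · symm
    rw [Ideal.Quotient.mkₐ_eq_mk, Ideal.Quotient.eq]
    refine Ideal.subset_span ?_
    rcases h with rfl | rfl <;> simp
  · rfl

/-- The chart is the hypersurface cut out by the dehomogenized equation. -/
lemma mem_chartIdeal_iff (A : SymMat n r l l₀) (F : Amb n r) :
    F ∈ chartIdeal A ↔ aeval (chartVar n r) (qpoly A) ∣ aeval (chartVar n r) F := by
  constructor
  · intro hF
    have hle : chartIdeal A ≤
        (Ideal.span {aeval (chartVar n r) (qpoly A)}).comap (aeval (chartVar n r)) := by
      rw [Ideal.span_le]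
      rintro G (rfl | rfl | rfl)
      · exact Ideal.subset_span rfl
      · simp [chartVar]
      · simp [chartVar]
    exact Ideal.mem_span_singleton.1 (hle hF)
  · intro hF
    rw [← Ideal.Quotient.eq_zero_iff_mem, ← mk_aeval_chartVar, ← zero_dvd_iff]
    have h0 : Ideal.Quotient.mk (chartIdeal A) (aeval (chartVar n r) (qpoly A)) = 0 := by
      rw [mk_aeval_chartVar, Ideal.Quotient.eq_zero_iff_mem]
      exact Ideal.subset_span (by simp)
    rw [← h0]
    exact map_dvd _ hF

lemma isPrime_chartIdeal (hn : 0 < n) (hrn : n ≤ r) (hA : A.1 = bMat e m c)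
    (hc : ∀ a, ∃ D : Derivation ℚ ℂ ℂ, ∀ b, D (c b) = if b = a then 1 else 0) :
    (chartIdeal A).IsPrime := by
  have h := irreducible_aeval_qpoly hn hrn hA hc isPartialChart_chartVar
  have : (Ideal.span {aeval (chartVar n r) (qpoly A)}).IsPrime :=
    (Ideal.span_singleton_prime h.ne_zero).2 h.prime
  have heq : chartIdeal A =
      (Ideal.span {aeval (chartVar n r) (qpoly A)}).comap (aeval (chartVar n r)) := by
    ext F
    rw [mem_chartIdeal_iff, Ideal.mem_comap, Ideal.mem_span_singleton]
  rw [heq]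
  infer_instance

/-- On the chart there is no relation between the coordinates other than `z_0`: the
dehomogenized equation has degree one in `z_0`. -/
lemma eq_zero_of_mem_chartIdeal (hn : 0 < n) (hrn : n ≤ r) (hA : A.1 = bMat e m c)
    {F : Amb n r} (hF : F ∈ supported ℂ ({Sum.inr 0}ᶜ : Set (Fin (n+1) ⊕ Fin (r+2))))
    (h : F ∈ chartIdeal A) : aeval (chartVar n r) F = 0 := by
  have hs := isPartialChart_chartVar (n := n) (r := r)
  rw [mem_chartIdeal_iff, qpoly_eq hA, map_add, map_mul, map_mul, aeval_X, map_ofNat] at h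
  have hsz : chartVar n r (Sum.inr 0) = X (Sum.inr 0) := by
    simp [chartVar]
  rw [hsz] at h
  exact eq_zero_of_dvd
    (mul_ne_zero two_ne_zero (irreducible_aeval_lPoly e hn hrn hs).ne_zero)
    (hs.aeval_mem_supported (rPoly_mem_supported m c)) (hs.aeval_mem_supported hF) h

/-- The `n + r` coordinates `x_1, …, x_n, z_2, …, z_{r+1}`, which form a transcendence basis of
the function field of `X`. -/
def coordEmb (n r : ℕ) (v : Fin (n+r)) : Fin (n+1) ⊕ Fin (r+2) :=
  Sum.map Fin.succ (fun j => j.succ.succ) (finSumFinEquiv.symm v)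

lemma coordEmb_injective : Function.Injective (coordEmb n r) :=
  (Function.Injective.sumMap (Fin.succ_injective _)
    ((Fin.succ_injective _).comp (Fin.succ_injective _))).comp finSumFinEquiv.symm.injective

lemma coordEmb_cases (v : Fin (n+r)) :
    (∃ k : Fin n, coordEmb n r v = Sum.inl k.succ) ∨
      ∃ j : Fin r, coordEmb n r v = Sum.inr j.succ.succ := by
  unfold coordEmb
  rcases finSumFinEquiv.symm v with k | j
  · exact Or.inl ⟨k, rfl⟩
  · exact Or.inr ⟨j, rfl⟩

lemma aeval_chartVar_rename (G : MvPolynomial (Fin (n+r)) ℂ) :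
    aeval (chartVar n r) (rename (coordEmb n r) G) = rename (coordEmb n r) G := by
  suffices h : (aeval (chartVar n r)).comp (rename (coordEmb n r)) =
      (rename (coordEmb n r) : MvPolynomial (Fin (n+r)) ℂ →ₐ[ℂ] Amb n r) from
    DFunLike.congr_fun h G
  refine algHom_ext fun v => ?_
  rw [AlgHom.comp_apply, rename_X, aeval_X, chartVar, if_neg]
  rcases coordEmb_cases v with ⟨k, h⟩ | ⟨j, h⟩ <;> rw [h]
  · simp [Fin.succ_ne_zero]
  · rintro (h' | h')
    · cases h'
    · exact Fin.succ_ne_zero j (Fin.succ_injective _ (Sum.inr_injective h'))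

lemma rename_coordEmb_mem_supported (G : MvPolynomial (Fin (n+r)) ℂ) :
    rename (coordEmb n r) G ∈ supported ℂ ({Sum.inr 0}ᶜ : Set (Fin (n+1) ⊕ Fin (r+2))) := by
  classical
  rw [mem_supported_compl_singleton]
  intro h
  obtain ⟨v, -, hv⟩ := Finset.mem_image.1 (vars_rename _ G h)
  rcases coordEmb_cases v with ⟨k, h⟩ | ⟨j, h⟩ <;> rw [h] at hv <;> simp [Fin.succ_ne_zero] at hv

/-- `ℂ(X)` is the rational function field in `x_1, …, x_n, z_2, …, z_{r+1}`: these are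
algebraically independent on the chart, and the remaining coordinate is `z_0 = -Q / (2 L)`. -/
lemma nonempty_fractionRing_chartRing_equiv (hn : 0 < n) (hrn : n ≤ r) (hA : A.1 = bMat e m c)
    (hc : ∀ a, ∃ D : Derivation ℚ ℂ ℂ, ∀ b, D (c b) = if b = a then 1 else 0) :
    Nonempty (FractionRing (ChartRing A 0 (Fin.succ 0)) ≃ₐ[ℂ] RatFF (n+r)) := by
  have hprime := isPrime_chartIdeal hn hrn hA hc
  have hdom : IsDomain (ChartRing A 0 (Fin.succ 0)) := Ideal.Quotient.isDomain (chartIdeal A)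
  let R := ChartRing A 0 (Fin.succ 0)
  let mk : Amb n r →ₐ[ℂ] R := Ideal.Quotient.mkₐ ℂ (chartIdeal A)
  have hmk0 : ∀ F, mk F = 0 ↔ F ∈ chartIdeal A := fun F => Ideal.Quotient.eq_zero_iff_mem
  have hmk_surj : Function.Surjective mk := Ideal.Quotient.mk_surjective
  let ψ : Amb n r →ₐ[ℂ] FractionRing R := (IsScalarTower.toAlgHom ℂ R (FractionRing R)).comp mk
  have hψ : ∀ F, ψ F = algebraMap R (FractionRing R) (mk F) := fun _ => rfl
  have hψ0 : ∀ F, ψ F = 0 ↔ F ∈ chartIdeal A := fun F => by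
    rw [hψ, IsFractionRing.to_map_eq_zero_iff, hmk0]
  let g : MvPolynomial (Fin (n+r)) ℂ →ₐ[ℂ] FractionRing R := ψ.comp (rename (coordEmb n r))
  have hg : Function.Injective g := by
    rw [injective_iff_map_eq_zero]
    intro G hG
    have h := eq_zero_of_mem_chartIdeal hn hrn hA (rename_coordEmb_mem_supported G)
      ((hψ0 _).1 hG)
    rw [aeval_chartVar_rename] at h
    exact rename_injective _ coordEmb_injective (h.trans (map_zero _).symm)
  let Φ : RatFF (n+r) →ₐ[ℂ] FractionRing R := IsFractionRing.liftAlgHom hg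
  have hΦ : ∀ G, Φ (algebraMap _ _ G) = g G := fun G => IsFractionRing.lift_algebraMap hg G
  have hvar : ∀ v, ψ (X (coordEmb n r v)) ∈ Φ.range := fun v =>
    ⟨algebraMap _ _ (X v), (hΦ _).trans (by simp [g])⟩
  have hone : ∀ v, chartVar n r v = 1 → ψ (X v) ∈ Φ.range := fun v hv => by
    have h : ψ (X v) = ψ (chartVar n r v) := by
      rw [hψ, hψ]
      congr 1
      have := mk_aeval_chartVar A (X v)
      rw [aeval_X] at this
      exact this.symm
    rw [h, hv, map_one]
    exact one_mem _
  have hX : ∀ v, v ≠ Sum.inr 0 → ψ (X v) ∈ Φ.range := by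
    rintro (k | j) hv
    · refine Fin.cases (hone _ (by simp [chartVar])) (fun k => ?_) k
      simpa [coordEmb] using hvar (finSumFinEquiv (Sum.inl k))
    · obtain ⟨j, rfl⟩ := Fin.exists_succ_eq.2 (fun h : j = 0 => hv (by rw [h]))
      clear hv
      revert j
      refine Fin.cases (hone _ (by simp [chartVar])) (fun j => ?_)
      simpa [coordEmb] using hvar (finSumFinEquiv (Sum.inr j))
  have hsupp : supported ℂ ({Sum.inr 0}ᶜ : Set (Fin (n+1) ⊕ Fin (r+2))) ≤ Φ.range.comap ψ := by
    refine Algebra.adjoin_le ?_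
    rintro _ ⟨v, hv, rfl⟩
    exact hX v hv
  -- The equation `2 L z_0 + Q = 0` gives `z_0 = -Q / (2 L)`.
  have hz : ψ (X (Sum.inr 0)) ∈ Φ.range := by
    obtain ⟨a, ha⟩ := hsupp (lPoly_mem_supported e)
    obtain ⟨b, hb⟩ := hsupp (rPoly_mem_supported m c)
    have ha' : Φ a = ψ (lPoly e) := ha
    have hb' : Φ b = ψ (rPoly m c) := hb
    have hne : ψ (lPoly e) ≠ 0 := fun h =>
      (irreducible_aeval_lPoly e hn hrn isPartialChart_chartVar).ne_zero
        (eq_zero_of_mem_chartIdeal hn hrn hA (lPoly_mem_supported e) ((hψ0 _).1 h))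
    have hq : ψ (qpoly A) = 0 := (hψ0 _).2 (Ideal.subset_span (by simp))
    rw [qpoly_eq hA, map_add, map_mul, map_mul, map_ofNat] at hq
    have h2 : (2 : FractionRing R) ≠ 0 := by
      rw [← map_ofNat (algebraMap ℂ (FractionRing R)) 2]
      exact (map_ne_zero _).2 two_ne_zero
    refine ⟨-b / (2 * a), ?_⟩
    change Φ (-b / (2 * a)) = _
    rw [map_div₀, map_neg, map_mul, map_ofNat, ha', hb', div_eq_iff (mul_ne_zero h2 hne)]
    linear_combination -hq
  have hall : ∀ F, ψ F ∈ Φ.range := by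
    intro F
    induction F using MvPolynomial.induction_on with
    | C a => exact ⟨algebraMap _ _ a, by simp [← algebraMap_eq]⟩
    | add F G hF hG => rw [map_add]; exact add_mem hF hG
    | mul_X F v hF =>
      rw [map_mul]
      refine mul_mem hF ?_
      by_cases hv : v = Sum.inr 0
      · rw [hv]; exact hz
      · exact hX v hv
  have hsurj : Function.Surjective Φ := by
    intro y
    obtain ⟨a, b, -, rfl⟩ := IsFractionRing.div_surjective (A := R) y
    obtain ⟨F, rfl⟩ := hmk_surj a
    obtain ⟨G, rfl⟩ := hmk_surj b
    obtain ⟨u, hu⟩ := hall F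
    obtain ⟨w, hw⟩ := hall G
    exact ⟨u / w, (map_div₀ Φ u w).trans (congrArg₂ (· / ·) hu hw)⟩
  exact ⟨(AlgEquiv.ofBijective Φ ⟨Φ.toRingHom.injective, hsurj⟩).symm⟩

end
end Rationality
end QB

/-- **Corollary (rational deformation types).**  Let `n, r` be positive integers with
`r ≥ n`, and let `(d_i)_{0 ≤ i ≤ r+1}` be non-negative integers of the same parity.
Then there exists a smooth `r`-fold quadric bundle of type `(d_i)` over `ℙⁿ`
which is rational. -/
theorem exists_rational_smooth_quadric_bundle
    (n r : ℕ) (hn : 0 < n) (hr : 0 < r) (hrn : n ≤ r)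
    (d : Fin (r+2) → ℤ)
    (hpos : ∀ i, 0 ≤ d i)
    (hparity : ∀ i j, Even (d i - d j)) :
    ∃ (l : Fin (r+2) → ℤ) (l₀ : ℤ), (∀ i, d i = 2 * l i + l₀) ∧
      ∃ A : QB.SymMat n r l l₀,
        QB.IsQuadricBundle A ∧ QB.SmoothTotalSpace A ∧ QB.IsRationalQB A := by
  -- Take `l₀ = d_0` and `l_i = (d_i - d_0) / 2`, so that `l_0 = 0`, the entries `g_j` have degree
  -- `(d_{j+1} + d_0) / 2 ≥ 0` and the entries `f_j` have degree `d_{j+1}`.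
  have he : ∀ i, 2 * ((d i - d 0) / 2) = d i - d 0 := fun i =>
    Int.mul_ediv_cancel' (hparity i 0).two_dvd
  obtain ⟨c, hc⟩ := exists_complex_dual_derivations (Fin (r+1) × Fin (n+1))
  let e : Fin (r+1) → ℕ := fun j => ((d j.succ + d 0) / 2).toNat
  let m : Fin (r+1) → ℕ := fun j => (d j.succ).toNat
  have hdeg : ∀ i j, QB.bMat e m c i j ∈
      QB.homComp n ((d i - d 0) / 2 + (d j - d 0) / 2 + d 0) := by
    have he' : ∀ j : Fin (r+1), (d j.succ - d 0) / 2 + d 0 = (e j : ℤ) := fun j => by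
      have h1 := he j.succ
      have h2 := hpos j.succ
      have h3 := hpos 0
      simp only [e]
      omega
    intro i j
    refine Fin.cases ?_ (fun i => ?_) i <;> refine Fin.cases ?_ (fun j => ?_) j
    · exact zero_mem _
    · exact QB.mem_homComp (by simpa using he' j) (QB.gPoly_isHomogeneous e j)
    · exact QB.mem_homComp (by simpa using he' i) (QB.gPoly_isHomogeneous e i)
    · rw [QB.bMat_succ_succ]
      split_ifs with h
      · subst h
        refine QB.mem_homComp ?_ (QB.fPoly_isHomogeneous m c i)
        have h1 := he i.succ
        have h2 := hpos i.succ
        simp only [m]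
        omega
      · exact zero_mem _
  refine ⟨fun i => (d i - d 0) / 2, d 0, fun i => by have := he i; dsimp only; omega,
    ⟨QB.bMat e m c, QB.bMat_symm e m c, hdeg⟩, QB.isQuadricBundle_of_bMat hrn rfl hc,
    QB.smoothTotalSpace_of_bMat hrn rfl hc, QB.isDomain_coneRing hn hrn rfl hc,
    0, Fin.succ 0, QB.nonempty_fractionRing_chartRing_equiv hn hrn rfl hc⟩
end
end
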